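/- Assuming every set of 10 points in general position determines a 5-hole, every set of n points in general position in the plane determines at least c·n²/L(P) distinct 5-holes for some absolute constant c > 0, where L(P) denotes the number of convex layers of P; moreover the number of 5-holes is also at least c·|ℓ₁|·n, where ℓ₁ is the first (outermost) convex layer of P. -/

import Mathlib

open scoped Classical

noncomputable section

abbrev Pt : Type := EuclideanSpace ℝ (Fin 2)

/-- No three distinct points of `P` are collinear. -/
def GenPos (P : Set Pt) : Prop :=
  ∀ a ∈ P, ∀ b ∈ P, ∀ c ∈ P, a ≠ b → a ≠ c → b ≠ c → ¬ Collinear ℝ ({a, b, c} : Set Pt)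

/-- A set of points is in convex position if every point is an extreme point:
no point lies in the convex hull of the others. -/
def ConvexPos (S : Set Pt) : Prop := ∀ p ∈ S, p ∉ convexHull ℝ (S \ {p})

/-- The 5-holes of `P`: 5-element subsets of `P` in convex position whose
convex hull has no point of `P` in its interior. -/
def Holes5 (P : Set Pt) : Set (Finset Pt) :=
  {H | H.card = 5 ∧ ↑H ⊆ P ∧ ConvexPos ↑H ∧
    ∀ x ∈ P, x ∉ interior (convexHull ℝ (H : Set Pt))}

/-- Orientation determinant of the triple `(o, a, b)`. -/
def det2 (o a b : Pt) : ℝ :=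
  (a 0 - o 0) * (b 1 - o 1) - (a 1 - o 1) * (b 0 - o 0)

/-- `v` lists the vertices of a strictly convex polygon in cyclic order:
for every edge `v i v (i+1)`, all other vertices lie strictly on the same side. -/
def ConvexCyclicOrder {n : ℕ} [NeZero n] (v : Fin n → Pt) : Prop :=
  ∃ σ : ℝ, (σ = 1 ∨ σ = -1) ∧
    ∀ i j : Fin n, j ≠ i → j ≠ i + 1 → 0 < σ * det2 (v i) (v (i + 1)) (v j)

/-- `x` lies in the closed angular region at `p` spanned by the rays from `p`
through `a` and through `c` (the convex cone generated by the two rays). -/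
def InAngle (a p c x : Pt) : Prop :=
  ∃ s t : ℝ, 0 ≤ s ∧ 0 ≤ t ∧ x = p + s • (a - p) + t • (c - p)

/-- The extreme points (convex-hull vertices) of a planar point set. -/
def extremePts (P : Set Pt) : Set Pt := {p ∈ P | p ∉ convexHull ℝ (P \ {p})}

/-- What remains of `P` after peeling off the first `n` convex layers. -/
def layerRest (P : Set Pt) : ℕ → Set Pt
  | 0 => P
  | n + 1 => layerRest P n \ extremePts (layerRest P n)

/-- The `i`-th convex layer of `P` (0-indexed). -/
def layer (P : Set Pt) (i : ℕ) : Set Pt := extremePts (layerRest P i)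

/-- The number of convex layers of `P`. -/
def numLayers (P : Set Pt) : ℕ := {i | (layer P i).Nonempty}.ncard

/-! ### Orientation basics -/

lemma det2_comb (o u x y : Pt) (s t : ℝ) (h : s + t = 1) :
    det2 o u (s • x + t • y) = s * det2 o u x + t * det2 o u y := by
  have ht : t = 1 - s := by linarith
  subst ht
  simp [det2]
  ring

lemma hull_nonneg {S : Set Pt} {o u : Pt} {e : ℝ} (h : ∀ z ∈ S, 0 ≤ e * det2 o u z) :
    ∀ z ∈ convexHull ℝ S, 0 ≤ e * det2 o u z := by
  have hc : Convex ℝ {z : Pt | 0 ≤ e * det2 o u z} := by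
    intro x hx y hy s t hs ht hst
    simp only [Set.mem_ofPred_eq] at *
    rw [det2_comb _ _ _ _ _ _ hst]
    have := mul_nonneg hs hx
    have := mul_nonneg ht hy
    linarith
  intro z hz
  exact convexHull_min (fun z hz => h z hz) hc hz

lemma hull_pos_or {S : Set Pt} {o u v : Pt} {e : ℝ} (hv : det2 o u v = 0)
    (h : ∀ z ∈ S, 0 < e * det2 o u z ∨ z = v) :
    ∀ z ∈ convexHull ℝ S, 0 < e * det2 o u z ∨ z = v := by
  have hc : Convex ℝ {z : Pt | 0 < e * det2 o u z ∨ z = v} := by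
    intro x hx y hy s t hs ht hst
    simp only [Set.mem_ofPred_eq] at *
    rw [det2_comb _ _ _ _ _ _ hst]
    rcases hs.eq_or_lt with rfl | hs
    · have : t = 1 := by linarith
      subst this
      simpa using hy
    rcases ht.eq_or_lt with rfl | ht
    · have : s = 1 := by linarith
      subst this
      simpa using hx
    rcases hx with hx | rfl
    · left
      have h1 := mul_pos hs hx
      rcases hy with hy | rfl
      · have h2 := mul_pos ht hy
        linarith
      · rw [hv]; linarith
    · rcases hy with hy | rfl
      · left
        have h2 := mul_pos ht hy
        rw [hv]; linarith
      · right
        rw [← add_smul, hst, one_smul]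
  intro z hz
  exact convexHull_min (fun z hz => h z hz) hc hz

lemma det2_ne {P : Set Pt} (hP : GenPos P) {a b c : Pt} (ha : a ∈ P) (hb : b ∈ P) (hc : c ∈ P)
    (hab : a ≠ b) (hac : a ≠ c) (hbc : b ≠ c) : det2 a b c ≠ 0 := by
  intro h
  apply hP a ha b hb c hc hab hac hbc
  rw [collinear_iff_of_mem (p₀ := a) (by simp)]
  refine ⟨b - a, ?_⟩
  simp only [det2] at h
  have key : ∃ r : ℝ, c = r • (b - a) + a := by
    by_cases h0 : b 0 - a 0 = 0
    · have h1 : b 1 - a 1 ≠ 0 := by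
        intro h1
        apply hab
        ext i
        fin_cases i
        · simp; linarith
        · simp; linarith
      have h2 : c 0 - a 0 = 0 := by
        rw [h0] at h
        have : (b 1 - a 1) * (c 0 - a 0) = 0 := by linarith
        exact (mul_eq_zero.1 this).resolve_left h1
      refine ⟨(c 1 - a 1) / (b 1 - a 1), ?_⟩
      ext i
      fin_cases i
      · simp; rw [h0]; linarith
      · simp; field_simp; ring
    · refine ⟨(c 0 - a 0) / (b 0 - a 0), ?_⟩
      ext i
      fin_cases i
      · simp; field_simp; ring
      · simp; field_simp; linarith
  intro q hq
  simp only [Set.mem_insert_iff, Set.mem_singleton_iff] at hq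
  rcases hq with rfl | rfl | rfl
  · exact ⟨0, by simp⟩
  · exact ⟨1, by simp⟩
  · exact key

lemma tri_mem {e : ℝ} {p x y w : Pt} (h1 : 0 < e * det2 p x w) (h2 : 0 < e * det2 x y w)
    (h3 : 0 < e * det2 y p w) : w ∈ convexHull ℝ ({p, x, y} : Set Pt) := by
  set A := e * det2 p x w with hA
  set B := e * det2 x y w with hB
  set D := e * det2 y p w with hD
  have hT : 0 < A + B + D := by linarith
  have hw : w = ∑ i : Fin 3, (![B / (A+B+D), D / (A+B+D), A / (A+B+D)] i) • (![p, x, y] i) := by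
    ext i
    simp only [Fin.sum_univ_three, Matrix.cons_val_zero, Matrix.cons_val_one, Matrix.cons_val,
      PiLp.add_apply, PiLp.smul_apply, smul_eq_mul]
    have : w i * (A + B + D) = B * p i + D * x i + A * y i := by
      rw [hA, hB, hD]
      fin_cases i <;> simp [det2] <;> ring
    field_simp
    linarith
  rw [hw]
  apply (convex_convexHull ℝ ({p, x, y} : Set Pt)).sum_mem
  · intro i _
    fin_cases i <;> simp <;> positivity
  · simp [Fin.sum_univ_three]; field_simp; ring
  · intro i _
    apply subset_convexHull
    fin_cases i <;> simp

lemma not_interior_of_support {S : Set Pt} {o u v : Pt} {e : ℝ} (he : e ≠ 0) (hou : o ≠ u)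
    (hv : det2 o u v = 0) (h : ∀ z ∈ S, 0 ≤ e * det2 o u z) :
    v ∉ interior (convexHull ℝ S) := by
  intro hi
  set d : Pt := !₂[-(u 1 - o 1), u 0 - o 0] with hd
  have hcont : Continuous (fun t : ℝ => v - (t * e) • d) := by fun_prop
  have hev : ∀ᶠ t : ℝ in nhds 0, v - (t * e) • d ∈ interior (convexHull ℝ S) := by
    apply hcont.continuousAt.eventually_mem
    apply isOpen_interior.mem_nhds
    simpa using hi
  obtain ⟨δ, hδ, hb⟩ := Metric.eventually_nhds_iff.1 hev
  have h1 := hb (y := δ / 2) (by rw [Real.dist_eq, sub_zero, abs_of_pos] <;> linarith)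
  have h2 := hull_nonneg h _ (interior_subset h1)
  have hN : 0 < (u 0 - o 0)^2 + (u 1 - o 1)^2 := by
    by_contra hcon
    apply hou
    have h3 : u 0 - o 0 = 0 := by nlinarith [sq_nonneg (u 0 - o 0), sq_nonneg (u 1 - o 1)]
    have h4 : u 1 - o 1 = 0 := by nlinarith [sq_nonneg (u 0 - o 0), sq_nonneg (u 1 - o 1)]
    ext i
    fin_cases i
    · simp; linarith
    · simp; linarith
  have h3 : e * det2 o u (v - (δ / 2 * e) • d) =
      e * det2 o u v - δ / 2 * (e^2 * ((u 0 - o 0)^2 + (u 1 - o 1)^2)) := by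
    simp [det2, hd]; ring
  rw [h3, hv] at h2
  have : 0 < δ / 2 * (e^2 * ((u 0 - o 0)^2 + (u 1 - o 1)^2)) := by positivity
  linarith

/-- in a half plane bounded by a line through `o`, rotation about `o` is a linear order -/
lemma rot_key {o u : Pt} (hou : o ≠ u) : ∃ κ : Pt → ℝ, ∀ e : ℝ, ∀ y w : Pt,
    0 < e * det2 o u y → 0 < e * det2 o u w → (0 < det2 o y w ↔ κ w < κ y) := by
  have hN : 0 < (u 0 - o 0)^2 + (u 1 - o 1)^2 := by
    by_contra hcon
    apply hou
    have h3 : u 0 - o 0 = 0 := by nlinarith [sq_nonneg (u 0 - o 0), sq_nonneg (u 1 - o 1)]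
    have h4 : u 1 - o 1 = 0 := by nlinarith [sq_nonneg (u 0 - o 0), sq_nonneg (u 1 - o 1)]
    ext i
    fin_cases i
    · simp; linarith
    · simp; linarith
  refine ⟨fun w => ((u 0 - o 0) * (w 0 - o 0) + (u 1 - o 1) * (w 1 - o 1)) / det2 o u w, ?_⟩
  intro e y w hy hw
  have hyw : 0 < det2 o u y * det2 o u w := by
    have h1 := mul_pos hy hw
    have he : e ≠ 0 := by rintro rfl; simp at hy
    have h2 : 0 < e^2 := by positivity
    have h3 : 0 < e^2 * (det2 o u y * det2 o u w) := by nlinarith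
    exact (pos_iff_pos_of_mul_pos h3).1 h2
  have hy0 : det2 o u y ≠ 0 := left_ne_zero_of_mul hyw.ne'
  have hw0 : det2 o u w ≠ 0 := right_ne_zero_of_mul hyw.ne'
  set N := (u 0 - o 0)^2 + (u 1 - o 1)^2
  have key : N * det2 o y w = (det2 o u y * det2 o u w) *
     (((u 0 - o 0) * (y 0 - o 0) + (u 1 - o 1) * (y 1 - o 1)) / det2 o u y -
      ((u 0 - o 0) * (w 0 - o 0) + (u 1 - o 1) * (w 1 - o 1)) / det2 o u w) := by
    field_simp
    simp only [N, det2]; ring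
  rw [← sub_pos (b := _ / det2 o u w)]
  constructor
  · intro h
    have : 0 < N * det2 o y w := by positivity
    rw [key] at this
    exact (pos_iff_pos_of_mul_pos this).1 hyw
  · intro h
    have : 0 < N * det2 o y w := by rw [key]; positivity
    exact (pos_iff_pos_of_mul_pos this).1 hN

lemma det2_swap (a b c : Pt) : det2 a c b = - det2 a b c := by simp [det2]; ring
lemma det2_rot (a b c : Pt) : det2 b c a = det2 a b c := by simp [det2]; ring
@[simp] lemma det2_self1 (a b : Pt) : det2 a a b = 0 := by simp [det2]
@[simp] lemma det2_self2 (a b : Pt) : det2 a b a = 0 := by simp [det2]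
@[simp] lemma det2_self3 (a b : Pt) : det2 a b b = 0 := by simp [det2]; ring

lemma plucker (o u x y z : Pt) :
    det2 o u y * det2 o x z = det2 o u x * det2 o y z + det2 o u z * det2 o x y := by
  simp only [det2]; ring

/-- an extreme point has a strictly supporting line -/
lemma exists_support {P : Finset Pt} {p : Pt} (hp : p ∉ convexHull ℝ ((P : Set Pt) \ {p}))
    : ∃ u : Pt, (∀ x ∈ P, x ≠ p → 0 < det2 p u x) := by
  have hfin : ((P : Set Pt) \ {p}).Finite := P.finite_toSet.subset Set.sdiff_subset
  obtain ⟨f, r, h1, h2⟩ := geometric_hahn_banach_point_closed (convex_convexHull ℝ _)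
    (hfin.isClosed_convexHull ℝ) hp
  set e0 : Pt := !₂[1, 0] with he0
  set e1 : Pt := !₂[0, 1] with he1
  have hf : ∀ x : Pt, f x = x 0 * f e0 + x 1 * f e1 := by
    intro x
    have : x = x 0 • e0 + x 1 • e1 := by
      ext i
      fin_cases i <;> simp [he0, he1]
    conv_lhs => rw [this]
    simp
  refine ⟨!₂[p 0 + f e1, p 1 - f e0], ?_⟩
  intro x hx hxp
  have h3 := h2 x (subset_convexHull ℝ _ ⟨hx, hxp⟩)
  have h4 : f p < f x := h1.trans h3
  rw [hf p, hf x] at h4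
  simp [det2]
  linarith

/-! ### The order around an extreme point -/

lemma plucker_e {e : ℝ} (o u x y z : Pt) :
    (e * det2 o u y) * (e * det2 o x z) =
      (e * det2 o u x) * (e * det2 o y z) + (e * det2 o u z) * (e * det2 o x y) := by
  have := plucker o u x y z
  linear_combination e ^ 2 * this

/-- `y` lies in the cone of `x` and `z`, both positive from `u` -/
lemma cone_pos {e : ℝ} {o u x y z : Pt} (h1 : 0 < e * det2 o u x) (h2 : 0 < e * det2 o u z)
    (h3 : 0 < e * det2 o x y) (h4 : 0 < e * det2 o y z) (h5 : 0 < e * det2 o x z) :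
    0 < e * det2 o u y := by
  have h := plucker_e (e := e) o u x y z
  have h6 := mul_pos h1 h4
  have h7 := mul_pos h2 h3
  by_contra hcon
  nlinarith [mul_nonneg (not_lt.1 hcon |> neg_nonneg.2) h5.le]

lemma cone_mid {e : ℝ} {o u x y z : Pt} (h0 : 0 < e * det2 o u y) (h1 : 0 < e * det2 o u x)
    (h2 : 0 < e * det2 o u z)
    (h3 : 0 < e * det2 o x y) (h4 : 0 < e * det2 o y z) :
    0 < e * det2 o x z := by
  have h := plucker_e (e := e) o u x y z
  have h6 := mul_pos h1 h4
  have h7 := mul_pos h2 h3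
  by_contra hcon
  nlinarith [mul_nonneg (not_lt.1 hcon |> neg_nonneg.2) h0.le]

/-- `p` is an extreme point of `P` and `p u` is a strictly supporting line -/
structure Cfg (P : Finset Pt) (p u : Pt) : Prop where
  gp : GenPos (P : Set Pt)
  hp : p ∈ P
  ext : p ∉ convexHull ℝ ((P : Set Pt) \ {p})
  sup : ∀ x ∈ P, x ≠ p → 0 < det2 p u x

lemma Cfg.ne {P : Finset Pt} {p u : Pt} (h : Cfg P p u) {a b c : Pt} (ha : a ∈ P) (hb : b ∈ P)
    (hc : c ∈ P) (hab : a ≠ b) (hac : a ≠ c) (hbc : b ≠ c) : det2 a b c ≠ 0 :=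
  det2_ne h.gp ha hb hc hab hac hbc

lemma Cfg.trans {P : Finset Pt} {p u : Pt} (h : Cfg P p u) {e : ℝ} (he : e = 1 ∨ e = -1)
    {x y z : Pt} (hx : x ∈ P)
    (hy : y ∈ P) (hz : z ∈ P) (h1 : 0 < e * det2 p x y) (h2 : 0 < e * det2 p y z) :
    0 < e * det2 p x z := by
  have hxp : x ≠ p := by rintro rfl; simp at h1
  have hyp : y ≠ p := by rintro rfl; simp at h1
  have hzp : z ≠ p := by rintro rfl; simp at h2
  have a1 := h.sup x hx hxp
  have a2 := h.sup y hy hyp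
  have a3 := h.sup z hz hzp
  have hpl : det2 p u y * (e * det2 p x z) =
      det2 p u x * (e * det2 p y z) + det2 p u z * (e * det2 p x y) := by
    linear_combination e * plucker p u x y z
  have h6 := mul_pos a1 h2
  have h7 := mul_pos a3 h1
  by_contra hcon
  nlinarith [mul_nonneg (not_lt.1 hcon |> neg_nonneg.2) a2.le]

lemma Cfg.trans1 {P : Finset Pt} {p u : Pt} (h : Cfg P p u)
    {x y z : Pt} (hx : x ∈ P)
    (hy : y ∈ P) (hz : z ∈ P) (h1 : 0 < det2 p x y) (h2 : 0 < det2 p y z) :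
    0 < det2 p x z := by
  have := h.trans (e := 1) (Or.inl rfl) hx hy hz (by simpa using h1) (by simpa using h2)
  simpa using this

lemma Cfg.total {P : Finset Pt} {p u : Pt} (h : Cfg P p u) {x y : Pt} (hx : x ∈ P)
    (hy : y ∈ P) (hxp : x ≠ p) (hyp : y ≠ p) (hxy : x ≠ y) :
    0 < det2 p x y ∨ 0 < det2 p y x := by
  have := h.ne h.hp hx hy hxp.symm hyp.symm hxy
  rw [det2_swap p x y]
  rcases lt_or_gt_of_ne this with h1 | h1
  · right; linarith
  · left; exact h1

lemma Cfg.pu {P : Finset Pt} {p u : Pt} (h : Cfg P p u) {x : Pt} (hx : x ∈ P)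
    (hxp : x ≠ p) : p ≠ u := by
  rintro rfl
  have := h.sup x hx hxp
  simp at this

lemma Cfg.key {P : Finset Pt} {p u : Pt} (h : Cfg P p u) : ∃ ρ : Pt → ℝ,
    ∀ x ∈ P, ∀ y ∈ P, x ≠ p → y ≠ p → (0 < det2 p x y ↔ ρ x < ρ y) := by
  by_cases hpu : p = u
  · refine ⟨fun _ => 0, ?_⟩
    intro x hx y hy hxp
    exact absurd hpu (h.pu hx hxp)
  · obtain ⟨κ, hκ⟩ := rot_key hpu
    refine ⟨fun x => - κ x, ?_⟩
    intro x hx y hy hxp hyp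
    rw [hκ 1 x y (by simpa using h.sup x hx hxp) (by simpa using h.sup y hy hyp)]
    simp

lemma Cfg.exists_min {P : Finset Pt} {p u : Pt} (h : Cfg P p u) {K : Finset Pt} (hK : K ⊆ P)
    (hpK : p ∉ K) (hne : K.Nonempty) : ∃ a ∈ K, ∀ k ∈ K, k ≠ a → 0 < det2 p a k := by
  obtain ⟨ρ, hρ⟩ := h.key
  obtain ⟨a, ha, hmin⟩ := K.exists_min_image ρ hne
  have hap : a ≠ p := by rintro rfl; exact hpK ha
  refine ⟨a, ha, ?_⟩
  intro k hk hka
  have hkp : k ≠ p := by rintro rfl; exact hpK hk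
  rcases h.total (hK ha) (hK hk) hap hkp hka.symm with h1 | h1
  · exact h1
  · rw [hρ k (hK hk) a (hK ha) hkp hap] at h1
    exact absurd (hmin k hk) (not_le.2 h1)

def Near (P : Finset Pt) (e : ℝ) (p x z : Pt) : Prop :=
  0 < e * det2 x p z ∧
    (P.filter (fun w => 0 < e * det2 x p w ∧ 0 < e * det2 x w z)).card ≤ 11

def NB (P : Finset Pt) (e : ℝ) (p x y : Pt) : Prop :=
  y ∈ P ∧ 0 < e * det2 p y x ∧ ∀ w ∈ P, 0 < e * det2 p w x → w ≠ y → 0 < e * det2 x y w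

lemma NB.near {P : Finset Pt} {e : ℝ} {p x y : Pt} (h : NB P e p x y) : Near P e p x y := by
  obtain ⟨hy, h1, h2⟩ := h
  refine ⟨by rwa [← det2_rot], ?_⟩
  rw [Finset.filter_eq_empty_iff.2]
  · simp
  · intro w hw hcon
    obtain ⟨h3, h4⟩ := hcon
    by_cases hwy : w = y
    · subst hwy; simp at h4
    · have h5 := h2 w hw (by rwa [det2_rot]) hwy
      rw [det2_swap] at h4
      linarith

lemma NB.exists {P : Finset Pt} {p u : Pt} (h : Cfg P p u) {e : ℝ} (he : e = 1 ∨ e = -1) {x : Pt}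
    (hx : x ∈ P) (hxp : x ≠ p) (hw : ∃ w ∈ P, 0 < e * det2 p w x) : ∃ y, NB P e p x y := by
  obtain ⟨κ, hκ⟩ := rot_key hxp
  obtain ⟨w, hw, hwx⟩ := hw
  obtain ⟨y, hy, hmax⟩ := (P.filter (fun w => 0 < e * det2 p w x)).exists_max_image
    (fun z => e * κ z) ⟨w, by simp [hw, hwx]⟩
  simp only [Finset.mem_filter] at hy hmax
  refine ⟨y, hy.1, hy.2, ?_⟩
  intro w hw hwx hwy
  have h1 := hmax w ⟨hw, hwx⟩
  have hyx : y ≠ x := by rintro rfl; simp at hy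
  have hwx' : w ≠ x := by rintro rfl; simp at hwx
  have h3 := h.ne hx hy.1 hw hyx.symm hwx'.symm hwy.symm
  have h4 := hκ e y w (by rw [← det2_rot]; exact hy.2) (by rw [← det2_rot]; exact hwx)
  have h5 := hκ e w y (by rw [← det2_rot]; exact hwx) (by rw [← det2_rot]; exact hy.2)
  rw [det2_swap x y w] at h5
  rcases he with rfl | rfl
  · by_contra hcon
    have h6 : 0 < - det2 x y w := by
      rcases lt_or_gt_of_ne h3 with h | h <;> linarith
    rw [h5] at h6
    linarith
  · by_contra hcon
    have h6 : 0 < det2 x y w := by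
      rcases lt_or_gt_of_ne h3 with h | h <;> linarith
    rw [h4] at h6
    linarith

lemma good_of_not_near {P : Finset Pt} {p u : Pt} (h : Cfg P p u) {e : ℝ} (he : e = 1 ∨ e = -1)
    {x x' : Pt} (hx : x ∈ P) (hxx : 0 < e * det2 p x x')
    (hn : ¬ Near P e p x' x) {C : Finset Pt} (hC : C.card ≤ 11)
    (htri : ∀ z ∈ P, z ∈ convexHull ℝ ({p, x, x'} : Set Pt) → z ∈ C) :
    ∃ w ∈ P, 0 < e * det2 p w x ∧ 0 < e * det2 x x' w := by
  have hxp : x ≠ p := by rintro rfl; simp at hxx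
  have h1 : ¬ (P.filter (fun w => 0 < e * det2 x' p w ∧ 0 < e * det2 x' w x)).card ≤ 11 := by
    intro hcon
    exact hn ⟨by rwa [← det2_rot x' p x], hcon⟩
  have h2 : ¬ (P.filter (fun w => 0 < e * det2 x' p w ∧ 0 < e * det2 x' w x)) ⊆ C := by
    intro hcon
    exact h1 ((Finset.card_le_card hcon).trans hC)
  rw [Finset.not_subset] at h2
  obtain ⟨w, hw, hwC⟩ := h2
  simp only [Finset.mem_filter] at hw
  obtain ⟨hwP, h3, h4⟩ := hw
  rw [det2_rot] at h4
  refine ⟨w, hwP, ?_, h4⟩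
  have hwp : w ≠ p := by rintro rfl; simp at h3
  have hwx : w ≠ x := by rintro rfl; simp at h4
  have h5 := h.ne h.hp hx hwP hxp.symm hwp.symm hwx.symm
  by_contra hcon
  apply hwC
  apply htri w hwP
  refine tri_mem (e := e) ?_ h4 h3
  rw [det2_swap p x w] at hcon
  rcases he with rfl | rfl
  · rcases lt_or_gt_of_ne h5 with h | h <;> linarith
  · rcases lt_or_gt_of_ne h5 with h | h <;> linarith

lemma good_nb {P : Finset Pt} {p : Pt} {e : ℝ}
    {x x' y : Pt} (hxx : 0 < e * det2 p x x') (hnb : NB P e p x y)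
    (hg : ∃ w ∈ P, 0 < e * det2 p w x ∧ 0 < e * det2 x x' w) : 0 < e * det2 x x' y := by
  obtain ⟨w, hw, h1, h2⟩ := hg
  by_cases hwy : w = y
  · subst hwy; exact h2
  have h3 := hnb.2.2 w hw h1 hwy
  have h4 := hnb.2.1
  rw [det2_rot] at h1 h4
  refine cone_pos (x := p) (z := w) ?_ h2 h4 h3 h1
  rwa [det2_rot]

/-! ### Cutting off an ear -/

lemma cut_lemma {S : Set Pt} (hS : Convex ℝ S) {p a u y : Pt} {e : ℝ} (hp : p ∈ S) (ha : a ∈ S)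
    (hu : ∀ s ∈ S, 0 ≤ det2 p u s) (huy : 0 ≤ det2 p u y) (hua : 0 < det2 p u a)
    (hay : ∀ s ∈ S, e * det2 a y s ≤ 0) (hpay : e * det2 p a y < 0)
    {x : Pt} (hx : x ∈ convexHull ℝ (insert y S)) (hpax : 0 ≤ e * det2 p a x) : x ∈ S := by
  rw [convexHull_insert ⟨p, hp⟩, hS.convexHull_eq, convexJoin_singleton_left] at hx
  simp only [Set.mem_iUnion] at hx
  obtain ⟨s, hs, hx⟩ := hx
  obtain ⟨α, β, hα, hβ, hαβ, rfl⟩ := hx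
  rw [det2_comb _ _ _ _ _ _ hαβ] at hpax
  set f := e * det2 p a y with hf
  set g := e * det2 p a s with hg
  have hfg : 0 ≤ α * f + β * g := by rw [hf, hg]; linarith
  rcases hα.eq_or_lt with rfl | hα
  · have : β = 1 := by linarith
    subst this; simpa using hs
  have hg0 : 0 < g := by
    by_contra hcon
    nlinarith
  have hD : 0 < g - f := by linarith
  set c : Pt := (g / (g - f)) • y + (- f / (g - f)) • s with hc
  have hsum : g / (g - f) + - f / (g - f) = 1 := by field_simp; ring
  have hc1 : det2 p a c = 0 := by
    rw [hc, det2_comb _ _ _ _ _ _ hsum]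
    have he : e ≠ 0 := by rintro rfl; simp [hf] at hpay
    have : e * (g / (g - f) * det2 p a y + -f / (g - f) * det2 p a s) = 0 := by
      have h1 : e * (g / (g - f) * det2 p a y + -f / (g - f) * det2 p a s) =
        g / (g - f) * f + -f / (g - f) * g := by rw [hf, hg]; ring
      rw [h1]; field_simp; ring
    exact (mul_eq_zero.1 this).resolve_left he
  have hc2 : 0 ≤ det2 p u c := by
    rw [hc, det2_comb _ _ _ _ _ _ hsum]
    have h1 : 0 ≤ g / (g - f) := by positivity
    have h2 : 0 ≤ - f / (g - f) := div_nonneg (by linarith) hD.le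
    have := mul_nonneg h1 huy
    have := mul_nonneg h2 (hu s hs)
    linarith
  have hc3 : e * det2 a y c ≤ 0 := by
    rw [hc, det2_comb _ _ _ _ _ _ hsum]
    have h2 : 0 ≤ - f / (g - f) := div_nonneg (by linarith) hD.le
    have := mul_nonneg h2 (neg_nonneg.2 (hay s hs))
    simp only [det2_self3]
    linarith
  set γ := det2 p u c / det2 p u a with hγ
  have hγ' : γ * det2 p u a = det2 p u c := by rw [hγ]; field_simp
  have hcp : c = (1 - γ) • p + γ • a := by
    have h0 : ∀ i, det2 p u a * c i = det2 p u a * ((1 - γ) * p i + γ * a i) := by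
      intro i
      simp only [det2] at hγ' hc1 ⊢
      fin_cases i
      · simp only [Fin.zero_eta]
        linear_combination (p 0 - a 0) * hγ' - (u 0 - p 0) * hc1
      · simp only [Fin.mk_one]
        linear_combination (p 1 - a 1) * hγ' - (u 1 - p 1) * hc1
    ext i
    have := mul_left_cancel₀ hua.ne' (h0 i)
    simpa using this
  have hγ0 : 0 ≤ γ := by positivity
  have hγ1 : γ ≤ 1 := by
    rw [hcp, det2_comb _ _ _ _ _ _ (by ring)] at hc3
    simp only [det2_self2] at hc3
    rw [det2_rot] at hc3
    by_contra hcon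
    nlinarith
  have hcS : c ∈ S := by
    rw [hcp]
    exact hS hp ha (by linarith) hγ0 (by ring)
  have hfin : α • y + β • s = (α * (g - f) / g) • c + ((α * f + β * g) / g) • s := by
    rw [hc, smul_add, smul_smul, smul_smul, add_assoc, ← add_smul]
    congr 2
    · field_simp
    · field_simp
      ring
  rw [hfin]
  apply hS hcS hs
  · positivity
  · positivity
  · have : β = 1 - α := by linarith
    subst this; field_simp; ring

/-! ### Sets with two ears -/

structure QS (P : Finset Pt) (p u : Pt) (K : Finset Pt) (e : ℝ) (a b y y' : Pt) : Prop where
  cfg : Cfg P p u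
  he : e = 1 ∨ e = -1
  KP : K ⊆ P
  pK : p ∉ K
  aK : a ∈ K
  bK : b ∈ K
  ab : a ≠ b
  min : ∀ k ∈ K, k ≠ a → 0 < e * det2 p a k
  max : ∀ k ∈ K, k ≠ b → 0 < e * det2 p k b
  nb : NB P e p a y
  nb' : NB P (-e) p b y'
  good : ∀ k ∈ K, k ≠ a → 0 < e * det2 a k y
  good' : ∀ k ∈ K, k ≠ b → 0 < (-e) * det2 b k y'

section QSsec

variable {P : Finset Pt} {p u : Pt} {K : Finset Pt} {e : ℝ} {a b y y' : Pt}

lemma QS.symm (h : QS P p u K e a b y y') : QS P p u K (-e) b a y' y where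
  cfg := h.cfg
  he := by rcases h.he with rfl | rfl <;> simp
  KP := h.KP
  pK := h.pK
  aK := h.bK
  bK := h.aK
  ab := h.ab.symm
  min := by
    intro k hk hkb
    have := h.max k hk hkb
    rw [det2_swap] at this; linarith
  max := by
    intro k hk hka
    have := h.min k hk hka
    rw [det2_swap] at this; linarith
  nb := h.nb'
  nb' := by simpa using h.nb
  good := h.good'
  good' := by simpa using h.good

/-- the vertex set -/
def QV (p : Pt) (K : Finset Pt) (y y' : Pt) : Set Pt := insert y (insert y' (insert p (K : Set Pt)))

lemma QV_comm (p : Pt) (K : Finset Pt) (y y' : Pt) : QV p K y y' = QV p K y' y := by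
  unfold QV
  rw [Set.insert_comm]

lemma QS.ap (h : QS P p u K e a b y y') : a ≠ p := by
  rintro rfl; exact h.pK h.aK

lemma QS.yp (h : QS P p u K e a b y y') : y ≠ p := by
  rintro rfl; have := h.nb.2.1; simp at this

lemma QS.ya (h : QS P p u K e a b y y') : y ≠ a := by
  rintro rfl; have := h.nb.2.1; simp at this

lemma QS.e0 (h : QS P p u K e a b y y') : e ≠ 0 := by
  rcases h.he with rfl | rfl <;> norm_num

lemma QS.VP (h : QS P p u K e a b y y') : ∀ z ∈ QV p K y y', z ∈ P := by
  intro z hz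
  simp only [QV, Set.mem_insert_iff, Finset.mem_coe] at hz
  rcases hz with rfl | rfl | rfl | hz
  · exact h.nb.1
  · exact h.nb'.1
  · exact h.cfg.hp
  · exact h.KP hz

lemma QS.support (h : QS P p u K e a b y y') :
    ∀ z ∈ QV p K y y', 0 < (-e) * det2 a y z ∨ z = a ∨ z = y := by
  intro z hz
  simp only [QV, Set.mem_insert_iff, Finset.mem_coe] at hz
  have hpy := h.nb.2.1
  rcases hz with rfl | rfl | rfl | hz
  · simp
  · left
    have h1 := h.good b h.bK h.ab.symm
    have h2 := h.min b h.bK h.ab.symm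
    have h3 := h.good' a h.aK h.ab
    have h4 := h.nb'.2.1
    have h5 : 0 < e * det2 p b z := by rw [det2_swap] at h4; linarith
    have h6 := h.cfg.trans h.he (h.KP h.aK) (h.KP h.bK) h.nb'.1 h2 h5
    have h7 : 0 < e * det2 a b z := by
      rw [← det2_rot, det2_swap] at h3; linarith
    have h8 : 0 < e * det2 a z y := by
      refine cone_mid (u := b) (y := p) ?_ h7 h1 ?_ ?_
      · rwa [det2_rot]
      · rwa [det2_rot]
      · rwa [← det2_rot]
    rw [det2_swap] at h8
    linarith
  · left
    rw [det2_rot, det2_swap]; linarith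
  · by_cases hza : z = a
    · right; left; exact hza
    · left
      have := h.good z hz hza
      rw [det2_swap] at this; linarith

lemma QS.hull_support (h : QS P p u K e a b y y') :
    ∀ z ∈ convexHull ℝ (QV p K y y'), 0 ≤ (-e) * det2 a y z := by
  apply hull_nonneg
  intro z hz
  rcases h.support z hz with h1 | rfl | rfl
  · exact h1.le
  · simp
  · simp

lemma QS.before (h : QS P p u K e a b y y') {x : Pt} (hx : x ∈ P)
    (hxV : x ∈ convexHull ℝ (QV p K y y')) (hxa : 0 < e * det2 p x a) : x = y := by
  by_contra hxy
  have h1 := h.nb.2.2 x hx hxa hxy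
  have h2 := h.hull_support x hxV
  linarith

lemma QS.sup0 (h : QS P p u K e a b y y') {x : Pt} (hx : x ∈ P) : 0 ≤ det2 p u x := by
  by_cases hxp : x = p
  · subst hxp; simp
  · exact (h.cfg.sup x hx hxp).le

lemma QS.cut (h : QS P p u K e a b y y') {S : Set Pt} (hpS : p ∈ S) (haS : a ∈ S)
    (hS : ∀ z ∈ S, z ∈ QV p K y y') {x : Pt} (hx : x ∈ convexHull ℝ (insert y S))
    (hpax : 0 ≤ e * det2 p a x) : x ∈ convexHull ℝ S := by
  refine cut_lemma (convex_convexHull ℝ S) (p := p) (a := a) (u := u) (y := y) (e := e)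
    (subset_convexHull ℝ _ hpS) (subset_convexHull ℝ _ haS) ?_ (h.sup0 h.nb.1)
    (h.cfg.sup a (h.KP h.aK) h.ap) ?_ ?_ ?_ hpax
  · have := hull_nonneg (S := S) (o := p) (u := u) (e := 1) (fun z hz => by
      rw [one_mul]; exact h.sup0 (h.VP z (hS z hz)))
    simpa using this
  · intro s hs
    have := h.hull_support s (convexHull_mono hS hs)
    linarith
  · have := h.nb.2.1
    rw [det2_swap] at this; linarith
  · exact convexHull_mono (Set.insert_subset_insert (subset_convexHull ℝ S)) hx

lemma QS.island (h : QS P p u K e a b y y') {x : Pt} (hx : x ∈ P)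
    (hxV : x ∈ convexHull ℝ (QV p K y y')) :
    x = y ∨ x = y' ∨ x ∈ convexHull ℝ (insert p (K : Set Pt)) := by
  by_cases h1 : 0 < e * det2 p x a
  · left; exact h.before hx hxV h1
  by_cases h2 : 0 < (-e) * det2 p x b
  · right; left
    exact h.symm.before hx (by rw [QV_comm]; exact hxV) h2
  right; right
  have h3 : x ∈ convexHull ℝ (insert y' (insert p (K : Set Pt))) := by
    refine h.cut (by simp) (by simp [h.aK]) ?_ hxV ?_
    · intro z hz
      exact Or.inr hz
    · rw [det2_swap] at h1; linarith
  refine h.symm.cut (by simp) (by simp [h.bK]) ?_ h3 ?_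
  · intro z hz
    exact Or.inr (Or.inr hz)
  · rw [det2_swap] at h2; linarith

def QF (P : Finset Pt) (p : Pt) (K : Finset Pt) (y y' : Pt) : Finset Pt :=
  P.filter (fun z => z ∈ convexHull ℝ (QV p K y y'))

lemma mem_QF {z : Pt} : z ∈ QF P p K y y' ↔ z ∈ P ∧ z ∈ convexHull ℝ (QV p K y y') := by
  simp [QF]

lemma QF_comm : QF P p K y y' = QF P p K y' y := by
  unfold QF; rw [QV_comm]

lemma QS.V_QF (h : QS P p u K e a b y y') : ∀ z ∈ QV p K y y', z ∈ QF P p K y y' := by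
  intro z hz
  rw [mem_QF]
  exact ⟨h.VP z hz, subset_convexHull ℝ _ hz⟩

lemma QF_hull : convexHull ℝ (QF P p K y y' : Set Pt) ⊆ convexHull ℝ (QV p K y y') := by
  apply convexHull_min _ (convex_convexHull ℝ _)
  intro z hz
  exact (mem_QF.1 hz).2

lemma QS.a_vertex (h : QS P p u K e a b y y') :
    a ∉ convexHull ℝ ((QF P p K y y' : Set Pt) \ {a}) := by
  intro hcon
  have := hull_pos_or (o := a) (u := y) (v := y) (e := -e) (by simp) ?_ a hcon
  · rcases this with h1 | h1
    · simp at h1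
    · exact h.ya h1.symm
  · intro z hz
    obtain ⟨hz, hza⟩ := hz
    have hz := mem_QF.1 hz
    by_cases hzy : z = y
    · right; exact hzy
    left
    have h1 := h.hull_support z hz.2
    have h2 := h.cfg.ne (h.KP h.aK) h.nb.1 hz.1 h.ya.symm (Ne.symm hza) (Ne.symm hzy)
    have h3 : (-e) * det2 a y z ≠ 0 := mul_ne_zero (neg_ne_zero.2 h.e0) h2
    exact lt_of_le_of_ne h1 h3.symm

lemma QS.y_vertex (h : QS P p u K e a b y y') :
    y ∉ convexHull ℝ ((QF P p K y y' : Set Pt) \ {y}) := by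
  intro hcon
  have := hull_nonneg (o := p) (u := a) (e := e) ?_ y hcon
  · have h1 := h.nb.2.1
    rw [det2_swap] at h1; linarith
  · intro z hz
    obtain ⟨hz, hzy⟩ := hz
    have hz := mem_QF.1 hz
    by_contra hneg
    apply hzy
    apply h.before hz.1 hz.2
    rw [det2_swap]; linarith

lemma QS.b_vertex (h : QS P p u K e a b y y') :
    b ∉ convexHull ℝ ((QF P p K y y' : Set Pt) \ {b}) := by
  rw [QF_comm]; exact h.symm.a_vertex

lemma QS.y'_vertex (h : QS P p u K e a b y y') :
    y' ∉ convexHull ℝ ((QF P p K y y' : Set Pt) \ {y'}) := by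
  rw [QF_comm]; exact h.symm.y_vertex

lemma QS.not_int (h : QS P p u K e a b y y') {z : Pt} (hz : z = a ∨ z = y) :
    z ∉ interior (convexHull ℝ (QV p K y y')) := by
  refine not_interior_of_support (o := a) (u := y) (e := -e) (neg_ne_zero.2 h.e0) h.ya.symm ?_ ?_
  · rcases hz with rfl | rfl <;> simp
  · intro z hz
    exact h.hull_support z (subset_convexHull ℝ _ hz)

lemma QS.not_int_p (h : QS P p u K e a b y y') :
    p ∉ interior (convexHull ℝ (QV p K y y')) := by
  refine not_interior_of_support (o := p) (u := u) (e := 1) one_ne_zero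
    (h.cfg.pu (h.KP h.aK) h.ap) (by simp) ?_
  intro z hz
  rw [one_mul]
  exact h.sup0 (h.VP z hz)

end QSsec

/-- the pentagon with apex `p` over an empty triangle -/
lemma QS.pentagon {P : Finset Pt} {p u a b y y' : Pt} (h : QS P p u {a, b} 1 a b y y')
    (hemp : ∀ z ∈ P, z ∈ convexHull ℝ ({p, a, b} : Set Pt) → z = p ∨ z = a ∨ z = b) :
    ({y, y', p, a, b} : Finset Pt) ∈ Holes5 (P : Set Pt) := by
  have hV : (({y, y', p, a, b} : Finset Pt) : Set Pt) = QV p {a, b} y y' := by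
    simp [QV]
  have hap := h.ap
  have hbp := h.symm.ap
  have hyp := h.yp
  have hyp' := h.symm.yp
  have hya := h.ya
  have hyb' := h.symm.ya
  have h1 := h.nb.2.1
  have h2 := h.min b h.bK h.ab.symm
  have h3 := h.nb'.2.1
  have h3' : 0 < 1 * det2 p b y' := by rw [det2_swap] at h3; linarith
  have h4 := h.cfg.trans h.he h.nb.1 (h.KP h.aK) (h.KP h.bK) h1 h2
  have h5 := h.cfg.trans h.he (h.KP h.aK) (h.KP h.bK) h.nb'.1 h2 h3'
  have h6 := h.cfg.trans h.he h.nb.1 (h.KP h.bK) h.nb'.1 h4 h3'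
  have hyb : y ≠ b := by rintro rfl; simp at h4
  have hya' : y' ≠ a := by rintro rfl; simp at h5
  have hyy : y ≠ y' := by rintro rfl; simp at h6
  refine ⟨?_, ?_, ?_, ?_⟩
  · rw [Finset.card_insert_of_notMem, Finset.card_insert_of_notMem, Finset.card_insert_of_notMem,
      Finset.card_insert_of_notMem, Finset.card_singleton]
    · simp [h.ab]
    · simp [hap.symm, hbp.symm]
    · simp [hyp', hya', hyb']
    · simp [hyy, hyp, hya, hyb]
  · rw [hV]; intro z hz; exact h.VP z hz
  · rw [hV]
    have hsub : QV p {a, b} y y' ⊆ (QF P p {a, b} y y' : Set Pt) := fun z hz => h.V_QF z hz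
    intro z hz
    have hmono : ∀ z, z ∈ convexHull ℝ (QV p {a, b} y y' \ {z}) →
        z ∈ convexHull ℝ ((QF P p {a, b} y y' : Set Pt) \ {z}) := fun z hz =>
      convexHull_mono (Set.sdiff_subset_sdiff_left hsub) hz
    simp only [QV, Set.mem_insert_iff, Finset.mem_coe, Finset.mem_insert,
      Finset.mem_singleton] at hz
    rcases hz with rfl | rfl | rfl | rfl | rfl
    · exact fun hc => h.y_vertex (hmono _ hc)
    · exact fun hc => h.y'_vertex (hmono _ hc)
    · intro hc
      exact h.cfg.ext (convexHull_mono (Set.sdiff_subset_sdiff_left (fun z hz => h.VP z hz)) hc)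
    · exact fun hc => h.a_vertex (hmono _ hc)
    · exact fun hc => h.b_vertex (hmono _ hc)
  · rw [hV]
    intro x hx hint
    rcases h.island hx (interior_subset hint) with rfl | rfl | h7
    · exact h.not_int (Or.inr rfl) hint
    · rw [QV_comm] at hint
      exact h.symm.not_int (Or.inr rfl) hint
    · rcases hemp x hx (by simpa using h7) with rfl | rfl | rfl
      · exact h.not_int_p hint
      · exact h.not_int (Or.inl rfl) hint
      · rw [QV_comm] at hint
        exact h.symm.not_int (Or.inl rfl) hint

/-! ### Holes of islands, and the hypothesis for larger sets -/

lemma GenPos.mono {Q P : Set Pt} (h : GenPos P) (hQ : Q ⊆ P) : GenPos Q :=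
  fun a ha b hb c hc => h a (hQ ha) b (hQ hb) c (hQ hc)

lemma holes_island {Q P : Set Pt} (hQP : Q ⊆ P)
    (hisl : ∀ x ∈ P, x ∈ convexHull ℝ Q → x ∈ Q) : Holes5 Q ⊆ Holes5 P := by
  rintro H ⟨h1, h2, h3, h4⟩
  refine ⟨h1, h2.trans hQP, h3, ?_⟩
  intro x hx hint
  exact h4 x (hisl x hx (convexHull_mono h2 (interior_subset hint))) hint

lemma exists_extreme (Q : Finset Pt) (hQ : Q.Nonempty) :
    ∃ e ∈ Q, e ∉ convexHull ℝ ((Q : Set Pt) \ {e}) := by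
  have hc : IsCompact (convexHull ℝ (Q : Set Pt)) := Q.finite_toSet.isCompact_convexHull ℝ
  have hne : (convexHull ℝ (Q : Set Pt)).Nonempty := by
    rw [convexHull_nonempty_iff]; exact hQ
  obtain ⟨x, hx⟩ := hc.extremePoints_nonempty hne
  refine ⟨x, extremePoints_convexHull_subset hx, ?_⟩
  rw [(convex_convexHull ℝ _).mem_extremePoints_iff_mem_sdiff_convexHull_sdiff] at hx
  intro hcon
  exact hx.2 (convexHull_mono (Set.sdiff_subset_sdiff_left (subset_convexHull ℝ _)) hcon)

lemma harborth_ge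
    (harborth : ∀ Q : Finset Pt, Q.card = 10 → GenPos ↑Q → (Holes5 ↑Q).Nonempty) :
    ∀ n : ℕ, ∀ Q : Finset Pt, Q.card = 10 + n → GenPos ↑Q → (Holes5 ↑Q).Nonempty := by
  intro n
  induction n with
  | zero => intro Q hQ hg; exact harborth Q hQ hg
  | succ n ih =>
    intro Q hQ hg
    obtain ⟨e, he, hext⟩ := exists_extreme Q (Finset.card_pos.1 (by omega))
    have hsub : ((Q.erase e : Finset Pt) : Set Pt) ⊆ Q := by
      exact_mod_cast Finset.erase_subset e Q
    have h1 := ih (Q.erase e) (by rw [Finset.card_erase_of_mem he]; omega) (hg.mono hsub)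
    refine h1.mono (holes_island hsub ?_)
    intro x hx hxc
    rw [Finset.coe_erase] at hxc ⊢
    refine ⟨hx, ?_⟩
    rintro rfl
    exact hext hxc

/-! ### The main lemma for one extreme point -/

def CC (P : Finset Pt) (p : Pt) (H : Finset Pt) : Finset Pt :=
  P.filter (fun z => z ∈ convexHull ℝ (insert p (H : Set Pt)))

lemma mem_CC {P : Finset Pt} {p : Pt} {H : Finset Pt} {z : Pt} :
    z ∈ CC P p H ↔ z ∈ P ∧ z ∈ convexHull ℝ (insert p (H : Set Pt)) := by
  simp [CC]

def LL (W : Finset Pt) (p x : Pt) : Prop := x ≠ p ∧ ∀ w ∈ W, 0 < det2 p x w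
def RR (W : Finset Pt) (p x : Pt) : Prop := x ≠ p ∧ ∀ w ∈ W, 0 < det2 p w x

structure Win (P : Finset Pt) (p u : Pt) (W : Finset Pt) : Prop where
  cfg : Cfg P p u
  WP : W ⊆ P
  pW : p ∉ W
  int : ∀ x ∈ P, x ≠ p → x ∉ W → LL W p x ∨ RR W p x

structure HInv (p : Pt) (W C : Finset Pt) : Prop where
  l : ∀ s ∈ C, ∀ t ∈ C, LL W p s → LL W p t → s = t
  r : ∀ s ∈ C, ∀ t ∈ C, RR W p s → RR W p t → s = t

def TP (P : Finset Pt) (p : Pt) : Set (Finset Pt) :=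
  {H | H ∈ Holes5 (P : Set Pt) ∧
    (p ∈ H ∨ ∃ x ∈ H, ∃ z ∈ H, ∃ e : ℝ, (e = 1 ∨ e = -1) ∧ Near P e p x z)}

section main

variable {P : Finset Pt} {p u : Pt} {W : Finset Pt}

lemma Win.ll_down (h : Win P p u W) {x x' : Pt} (hx : x ∈ P) (hx' : x' ∈ P)
    (hxx : 0 < det2 p x x') (hl : LL W p x') : LL W p x :=
  ⟨by rintro rfl; simp at hxx,
    fun w hw => h.cfg.trans1 hx hx' (h.WP hw) hxx (hl.2 w hw)⟩

lemma Win.rr_up (h : Win P p u W) {x x' : Pt} (hx : x ∈ P) (hx' : x' ∈ P)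
    (hxx : 0 < det2 p x x') (hl : RR W p x) : RR W p x' :=
  ⟨by rintro rfl; simp at hxx,
    fun w hw => h.cfg.trans1 (h.WP hw) hx hx' (hl.2 w hw) hxx⟩

/-- a set `H` for which the two neighbour ears behave well -/
structure Bare (P : Finset Pt) (p : Pt) (H : Finset Pt) : Prop where
  HP : H ⊆ P
  pH : p ∉ H
  near : ∀ x ∈ H, ∀ z ∈ H, ∀ e : ℝ, (e = 1 ∨ e = -1) → ¬ Near P e p x z
  card : (CC P p H).card ≤ 11

lemma H_sub_CC {H : Finset Pt} (hH : H ⊆ P) : H ⊆ CC P p H := by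
  intro z hz
  rw [mem_CC]
  exact ⟨hH hz, subset_convexHull ℝ _ (by simp [hz])⟩

lemma Bare.good {H : Finset Pt} (hB : Bare P p H) (hc : Cfg P p u) {e : ℝ} (he : e = 1 ∨ e = -1)
    {x x' : Pt} (hx : x ∈ H) (hx' : x' ∈ H) (hxx : 0 < e * det2 p x x') :
    ∃ w ∈ P, 0 < e * det2 p w x ∧ 0 < e * det2 x x' w := by
  refine good_of_not_near hc he (hB.HP hx) hxx (hB.near x' hx' x hx e he) hB.card ?_
  intro z hz hzc
  rw [mem_CC]
  refine ⟨hz, convexHull_mono ?_ hzc⟩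
  intro w hw
  simp only [Set.mem_insert_iff, Set.mem_singleton_iff] at hw
  rcases hw with rfl | rfl | rfl <;> simp [hx, hx']

lemma Bare.nb {H : Finset Pt} (hB : Bare P p H) (hc : Cfg P p u) {e : ℝ} (he : e = 1 ∨ e = -1)
    {x x' : Pt} (hx : x ∈ H) (hx' : x' ∈ H) (hxx : 0 < e * det2 p x x') :
    ∃ y, NB P e p x y := by
  obtain ⟨w, hw, h1, _⟩ := hB.good hc he hx hx' hxx
  exact NB.exists hc he (hB.HP hx) (by rintro rfl; exact hB.pH hx) ⟨w, hw, h1⟩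

lemma Bare.qs {H : Finset Pt} (hB : Bare P p H) (hc : Cfg P p u) {K : Finset Pt} (hK : K ⊆ H)
    {a b : Pt} (ha : a ∈ K) (hb : b ∈ K) (hab : a ≠ b)
    (hmin : ∀ k ∈ K, k ≠ a → 0 < det2 p a k) (hmax : ∀ k ∈ K, k ≠ b → 0 < det2 p k b) :
    ∃ y y', QS P p u K 1 a b y y' := by
  have hab' := hmin b hb hab.symm
  have hmin1 : ∀ k ∈ K, k ≠ a → 0 < 1 * det2 p a k := by simpa using hmin
  have hmax1 : ∀ k ∈ K, k ≠ b → 0 < 1 * det2 p k b := by simpa using hmax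
  have hmax2 : ∀ k ∈ K, k ≠ b → 0 < (-1) * det2 p b k := by
    intro k hk hkb
    have := hmax k hk hkb
    rw [det2_swap] at this; linarith
  obtain ⟨y, hy⟩ := hB.nb hc (e := 1) (Or.inl rfl) (hK ha) (hK hb) (hmin1 b hb hab.symm)
  obtain ⟨y', hy'⟩ := hB.nb hc (e := -1) (Or.inr rfl) (hK hb) (hK ha) (hmax2 a ha hab)
  refine ⟨y, y', hc, Or.inl rfl, hK.trans hB.HP, fun h => hB.pH (hK h), ha, hb, hab, hmin1, hmax1,
    hy, hy', ?_, ?_⟩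
  · intro k hk hka
    exact good_nb (hmin1 k hk hka) hy
      (hB.good hc (Or.inl rfl) (hK ha) (hK hk) (hmin1 k hk hka))
  · intro k hk hkb
    exact good_nb (hmax2 k hk hkb) hy'
      (hB.good hc (Or.inr rfl) (hK hb) (hK hk) (hmax2 k hk hkb))

def Done (P : Finset Pt) (p : Pt) (W : Finset Pt) : Prop := ∃ H ∈ TP P p, ∃ x ∈ H, x ∈ W

lemma Bare.gap (h : Win P p u W) {H : Finset Pt} (hB : Bare P p H) (hI : HInv p W (CC P p H))
    {x x' b : Pt} (hx : x ∈ H) (hx' : x' ∈ H) (hb : b ∈ H) (hxx : 0 < det2 p x x')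
    (hxb : 0 < det2 p x' b) :
    Done P p W ∨ ∃ g ∈ P, g ∈ convexHull ℝ ({p, x, x'} : Set Pt) ∧ 0 < det2 p x g ∧
      0 < det2 p g x' := by
  have hne : x ≠ x' := by rintro rfl; simp at hxx
  have hxp : x ≠ p := by rintro rfl; exact hB.pH hx
  have hxp' : x' ≠ p := by rintro rfl; exact hB.pH hx'
  obtain ⟨y, y', hQ⟩ := hB.qs h.cfg (K := {x, x'}) (a := x) (b := x')
    (by intro z hz; simp at hz; rcases hz with rfl | rfl <;> assumption) (by simp) (by simp) hne
    (by intro k hk hkx; simp at hk; rcases hk with rfl | rfl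
        · exact absurd rfl hkx
        · exact hxx)
    (by intro k hk hkx; simp at hk; rcases hk with rfl | rfl
        · exact hxx
        · exact absurd rfl hkx)
  by_cases hemp : ∀ z ∈ P, z ∈ convexHull ℝ ({p, x, x'} : Set Pt) → z = p ∨ z = x ∨ z = x'
  · left
    refine ⟨_, ⟨hQ.pentagon hemp, Or.inl (by simp)⟩, x', by simp, ?_⟩
    by_contra hcon
    have hs := H_sub_CC (p := p) hB.HP
    rcases h.int x' (hB.HP hx') hxp' hcon with hl | hr
    · have := hI.l x (hs hx) x' (hs hx') (h.ll_down (hB.HP hx) (hB.HP hx') hxx hl) hl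
      exact hne this
    · have := hI.r x' (hs hx') b (hs hb) hr (h.rr_up (hB.HP hx') (hB.HP hb) hxb hr)
      subst this; simp at hxb
  · right
    push Not at hemp
    obtain ⟨g, hg, hgc, hgp, hgx, hgx'⟩ := hemp
    refine ⟨g, hg, hgc, ?_, ?_⟩
    · have h1 := hull_nonneg (o := p) (u := x) (e := 1) ?_ g hgc
      · have h2 := h.cfg.ne h.cfg.hp (hB.HP hx) hg hxp.symm hgp.symm hgx.symm
        rw [one_mul] at h1
        exact lt_of_le_of_ne h1 h2.symm
      · intro z hz
        simp only [Set.mem_insert_iff, Set.mem_singleton_iff] at hz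
        rcases hz with rfl | rfl | rfl
        · simp
        · simp
        · simpa using hxx.le
    · have h1 := hull_nonneg (o := p) (u := x') (e := -1) ?_ g hgc
      · have h2 := h.cfg.ne h.cfg.hp (hB.HP hx') hg hxp'.symm hgp.symm hgx'.symm
        rw [det2_swap]
        have : -1 * det2 p x' g ≠ 0 := by simpa using h2
        have := lt_of_le_of_ne h1 this.symm
        linarith
      · intro z hz
        simp only [Set.mem_insert_iff, Set.mem_singleton_iff] at hz
        rcases hz with rfl | rfl | rfl
        · simp
        · rw [det2_swap]; linarith
        · simp

/-- sorting five points around `p` -/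
lemma Cfg.sort5 (h : Cfg P p u) {H : Finset Pt} (hH : H ⊆ P) (hpH : p ∉ H) (hc : H.card = 5) :
    ∃ k1 k2 k3 k4 k5 : Pt, H = {k1, k2, k3, k4, k5} ∧ 0 < det2 p k1 k2 ∧ 0 < det2 p k2 k3 ∧
      0 < det2 p k3 k4 ∧ 0 < det2 p k4 k5 := by
  have step : ∀ n : ℕ, ∀ K : Finset Pt, K ⊆ H → K.card = n + 1 →
      ∃ a ∈ K, (K.erase a).card = n ∧ ∀ k ∈ K.erase a, 0 < det2 p a k := by
    intro n K hK hn
    obtain ⟨a, ha, hmin⟩ := h.exists_min (hK.trans hH) (fun hp => hpH (hK hp))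
      (Finset.card_pos.1 (by omega))
    refine ⟨a, ha, by rw [Finset.card_erase_of_mem ha]; omega, ?_⟩
    intro k hk
    rw [Finset.mem_erase] at hk
    exact hmin k hk.2 hk.1
  obtain ⟨k1, m1, c1, h1⟩ := step 4 H (Finset.Subset.refl _) hc
  obtain ⟨k2, m2, c2, h2⟩ := step 3 _ (Finset.erase_subset _ _) c1
  obtain ⟨k3, m3, c3, h3⟩ := step 2 _
    ((Finset.erase_subset _ _).trans (Finset.erase_subset _ _)) c2
  obtain ⟨k4, m4, c4, h4⟩ := step 1 _ ((Finset.erase_subset _ _).trans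
    ((Finset.erase_subset _ _).trans (Finset.erase_subset _ _))) c3
  obtain ⟨k5, hk5⟩ := Finset.card_eq_one.1 c4
  refine ⟨k1, k2, k3, k4, k5, ?_, h1 _ m2, h2 _ m3, h3 _ m4, h4 _ (by rw [hk5]; simp)⟩
  rw [← hk5, Finset.insert_erase m4, Finset.insert_erase m3, Finset.insert_erase m2,
    Finset.insert_erase m1]

lemma hole_meets (h : Win P p u W) {H : Finset Pt} (hH : H ⊆ P) (hc : H.card = 5)
    (hI : HInv p W (CC P p H)) : ∃ x ∈ H, x ∈ W := by
  by_contra hcon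
  push Not at hcon
  have hs := H_sub_CC (p := p) hH
  have hsub : H ⊆ insert p (H.filter (LL W p) ∪ H.filter (RR W p)) := by
    intro z hz
    by_cases hzp : z = p
    · simp [hzp]
    rcases h.int z (hH hz) hzp (hcon z hz) with h1 | h1 <;> simp [hz, h1]
  have h1 : (H.filter (LL W p)).card ≤ 1 := by
    rw [Finset.card_le_one]
    intro a ha b hb
    simp only [Finset.mem_filter] at ha hb
    exact hI.l a (hs ha.1) b (hs hb.1) ha.2 hb.2
  have h2 : (H.filter (RR W p)).card ≤ 1 := by
    rw [Finset.card_le_one]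
    intro a ha b hb
    simp only [Finset.mem_filter] at ha hb
    exact hI.r a (hs ha.1) b (hs hb.1) ha.2 hb.2
  have h3 := Finset.card_le_card hsub
  have h4 := Finset.card_insert_le p (H.filter (LL W p) ∪ H.filter (RR W p))
  have h5 := Finset.card_union_le (H.filter (LL W p)) (H.filter (RR W p))
  omega

end main

section main2

variable {P : Finset Pt} {p u : Pt} {W : Finset Pt}

lemma ten_points (h : Cfg P p u) {Q : Finset Pt} (hQ : Q ⊆ P) (hpQ : p ∈ Q) (v : Fin 9 → Pt)
    (hv : ∀ i, v i ∈ Q) (hvp : ∀ i, v i ≠ p)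
    (hlt : ∀ i : Fin 8, 0 < det2 p (v i.castSucc) (v i.succ)) : 10 ≤ Q.card := by
  obtain ⟨ρ, hρ⟩ := h.key
  have hmono : StrictMono (fun i => ρ (v i)) := by
    rw [Fin.strictMono_iff_lt_succ]
    intro i
    exact (hρ _ (hQ (hv _)) _ (hQ (hv _)) (hvp _) (hvp _)).1 (hlt i)
  have hinj : Function.Injective v := by
    intro i j hij
    apply hmono.injective
    simp [hij]
  have hsub : (Finset.univ.image v) ⊆ Q.erase p := by
    intro z hz
    simp only [Finset.mem_image, Finset.mem_univ, true_and] at hz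
    obtain ⟨i, rfl⟩ := hz
    rw [Finset.mem_erase]
    exact ⟨hvp i, hv i⟩
  have h1 := Finset.card_le_card hsub
  rw [Finset.card_image_of_injective _ hinj, Finset.card_erase_of_mem hpQ] at h1
  simp at h1
  omega

set_option maxHeartbeats 2000000 in
lemma step
    (harborth : ∀ Q : Finset Pt, 10 ≤ Q.card → GenPos ↑Q → (Holes5 ↑Q).Nonempty)
    (h : Win P p u W) {H : Finset Pt} (hH : H ∈ Holes5 (P : Set Pt))
    (hC : (CC P p H).card ≤ 11) (hI : HInv p W (CC P p H)) :
    Done P p W ∨ ∃ H' ∈ Holes5 (P : Set Pt), (CC P p H').card < (CC P p H).card ∧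
      HInv p W (CC P p H') := by
  have hHP : H ⊆ P := by exact_mod_cast hH.2.1
  by_cases hT : H ∈ TP P p
  · left
    obtain ⟨x, hx, hxW⟩ := hole_meets h hHP hH.1 hI
    exact ⟨H, hT, x, hx, hxW⟩
  have hpH : p ∉ H := fun hp => hT ⟨hH, Or.inl hp⟩
  have hB : Bare P p H := by
    refine ⟨hHP, hpH, ?_, hC⟩
    intro x hx z hz e he hn
    exact hT ⟨hH, Or.inr ⟨x, hx, z, hz, e, he, hn⟩⟩
  have hcf := h.cfg
  have hs := H_sub_CC (p := p) hHP
  obtain ⟨k1, k2, k3, k4, k5, rfl, h12, h23, h34, h45⟩ := h.cfg.sort5 hHP hpH hH.1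
  have m1 : k1 ∈ ({k1, k2, k3, k4, k5} : Finset Pt) := by simp
  have m2 : k2 ∈ ({k1, k2, k3, k4, k5} : Finset Pt) := by simp
  have m3 : k3 ∈ ({k1, k2, k3, k4, k5} : Finset Pt) := by simp
  have m4 : k4 ∈ ({k1, k2, k3, k4, k5} : Finset Pt) := by simp
  have m5 : k5 ∈ ({k1, k2, k3, k4, k5} : Finset Pt) := by simp
  have q1 := hHP m1
  have q2 := hHP m2
  have q3 := hHP m3
  have q4 := hHP m4
  have q5 := hHP m5
  have h13 := hcf.trans1 q1 q2 q3 h12 h23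
  have h14 := hcf.trans1 q1 q3 q4 h13 h34
  have h24 := hcf.trans1 q2 q3 q4 h23 h34
  have h25 := hcf.trans1 q2 q4 q5 h24 h45
  have h35 := hcf.trans1 q3 q4 q5 h34 h45
  rcases hB.gap h hI m1 m2 m5 h12 h25 with hd | ⟨g1, gP1, gc1, ga1, gb1⟩
  · exact Or.inl hd
  rcases hB.gap h hI m2 m3 m5 h23 h35 with hd | ⟨g2, gP2, gc2, ga2, gb2⟩
  · exact Or.inl hd
  rcases hB.gap h hI m3 m4 m5 h34 h45 with hd | ⟨g3, gP3, gc3, ga3, gb3⟩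
  · exact Or.inl hd
  set K : Finset Pt := {k1, k2, k3, k4} with hKdef
  have hKH : K ⊆ {k1, k2, k3, k4, k5} := by
    intro z hz
    simp only [hKdef, Finset.mem_insert, Finset.mem_singleton] at hz
    rcases hz with rfl | rfl | rfl | rfl <;> assumption
  have n14 : k1 ≠ k4 := by rintro rfl; simp at h14
  have n12 : k1 ≠ k2 := by rintro rfl; simp at h12
  have hmin : ∀ k ∈ K, k ≠ k1 → 0 < det2 p k1 k := by
    intro k hk hne
    simp only [hKdef, Finset.mem_insert, Finset.mem_singleton] at hk
    rcases hk with rfl | rfl | rfl | rfl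
    · exact absurd rfl hne
    · exact h12
    · exact h13
    · exact h14
  have hmax : ∀ k ∈ K, k ≠ k4 → 0 < det2 p k k4 := by
    intro k hk hne
    simp only [hKdef, Finset.mem_insert, Finset.mem_singleton] at hk
    rcases hk with rfl | rfl | rfl | rfl
    · exact h14
    · exact h24
    · exact h34
    · exact absurd rfl hne
  obtain ⟨y, y', hQ⟩ := hB.qs hcf hKH (a := k1) (b := k4) (by simp [hKdef]) (by simp [hKdef]) n14
    hmin hmax
  set Q := QF P p K y y' with hQdef
  have hQP : Q ⊆ P := fun z hz => (mem_QF.1 hz).1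
  have hyk : 0 < det2 p y k1 := by simpa using hQ.nb.2.1
  have hky : 0 < det2 p k4 y' := by
    have := hQ.nb'.2.1
    rw [det2_swap] at this; linarith
  have hyP := hQ.nb.1
  have hyP' := hQ.nb'.1
  have hVQ := hQ.V_QF
  have hpQ : p ∈ Q := hVQ p (by simp [QV])
  have hKQ : ∀ k ∈ K, k ∈ Q := fun k hk => hVQ k (by simp [QV, hk])
  have hyQ : y ∈ Q := hVQ y (by simp [QV])
  have hyQ' : y' ∈ Q := hVQ y' (by simp [QV])
  have htri : ∀ a ∈ K, ∀ b ∈ K, ∀ g ∈ P, g ∈ convexHull ℝ ({p, a, b} : Set Pt) → g ∈ Q := by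
    intro a ha b hb g hg hgc
    rw [hQdef, mem_QF]
    refine ⟨hg, convexHull_mono ?_ hgc⟩
    intro z hz
    simp only [Set.mem_insert_iff, Set.mem_singleton_iff] at hz
    rcases hz with rfl | rfl | rfl
    · simp [QV]
    · simp [QV, ha]
    · simp [QV, hb]
  have l1 : k1 ∈ K := by simp [hKdef]
  have l2 : k2 ∈ K := by simp [hKdef]
  have l3 : k3 ∈ K := by simp [hKdef]
  have l4 : k4 ∈ K := by simp [hKdef]
  have hg1 := htri k1 l1 k2 l2 g1 gP1 gc1
  have hg2 := htri k2 l2 k3 l3 g2 gP2 gc2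
  have hg3 := htri k3 l3 k4 l4 g3 gP3 gc3
  have np : ∀ {s t : Pt}, 0 < det2 p s t → s ≠ p ∧ t ≠ p := by
    intro s t hst
    constructor
    · rintro rfl; simp at hst
    · rintro rfl; simp at hst
  have hten : 10 ≤ Q.card := by
    refine ten_points hcf hQP hpQ ![y, k1, g1, k2, g2, k3, g3, k4, y'] ?_ ?_ ?_
    · simp only [Fin.forall_fin_succ]
      simp [hyQ, hyQ', hKQ, l1, l2, l3, l4, hg1, hg2, hg3]
    · simp only [Fin.forall_fin_succ]
      simp [(np hyk).1, (np hyk).2, (np ga1).2, (np h12).2, (np ga2).2, (np h23).2, (np ga3).2,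
        (np h34).2, (np hky).2]
    · simp only [Fin.forall_fin_succ]
      refine ⟨hyk, ga1, gb1, ga2, gb2, ga3, gb3, hky, ?_⟩
      intro i; exact i.elim0
  obtain ⟨H', hH'Q⟩ := harborth Q hten (hcf.gp.mono (by exact_mod_cast hQP))
  have hH' : H' ∈ Holes5 (P : Set Pt) := by
    refine holes_island (by exact_mod_cast hQP) ?_ hH'Q
    intro x hx hxc
    exact mem_QF.2 ⟨hx, QF_hull hxc⟩
  have hHQ : H' ⊆ Q := by exact_mod_cast hH'Q.2.1
  have hKC : ∀ z ∈ CC P p K, z ∈ CC P p {k1, k2, k3, k4, k5} := by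
    intro z hz
    rw [mem_CC] at hz ⊢
    exact ⟨hz.1, convexHull_mono (Set.insert_subset_insert (by exact_mod_cast hKH)) hz.2⟩
  have hK1 : ∀ z ∈ CC P p K, 0 ≤ det2 p k1 z := by
    intro z hz
    have := hull_nonneg (o := p) (u := k1) (e := 1) ?_ z (mem_CC.1 hz).2
    · simpa using this
    · intro w hw
      rcases hw with rfl | hw
      · simp
      · by_cases hwk : w = k1
        · subst hwk; simp
        · simpa using (hmin w hw hwk).le
  have hK4 : ∀ z ∈ CC P p K, 0 ≤ det2 p z k4 := by
    intro z hz
    have := hull_nonneg (o := p) (u := k4) (e := -1) ?_ z (mem_CC.1 hz).2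
    · rw [det2_swap]; linarith
    · intro w hw
      rcases hw with rfl | hw
      · simp
      · by_cases hwk : w = k4
        · subst hwk; simp
        · have := (hmax w hw hwk)
          rw [det2_swap] at this; linarith
  have hQcase : ∀ z ∈ Q, z = y ∨ z = y' ∨ z ∈ CC P p K := by
    intro z hz
    have hz := mem_QF.1 hz
    rcases hQ.island hz.1 hz.2 with h1 | h1 | h1
    · exact Or.inl h1
    · exact Or.inr (Or.inl h1)
    · exact Or.inr (Or.inr (mem_CC.2 ⟨hz.1, h1⟩))
  have hleft : ∀ z ∈ Q, LL W p z → z = y ∨ z = k1 := by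
    intro z hz hl
    rcases hQcase z hz with h1 | rfl | h1
    · exact Or.inl h1
    · exfalso
      have l4' := h.ll_down q4 hyP' hky hl
      exact n12 (hI.l k1 (hs m1) k2 (hs m2) (h.ll_down q1 q4 h14 l4') (h.ll_down q2 q4 h24 l4'))
    · right
      by_contra hzk
      have h2 := hcf.ne hcf.hp q1 (hQP hz) (np h12).1.symm hl.1.symm (Ne.symm hzk)
      have h3 := lt_of_le_of_ne (hK1 z h1) h2.symm
      exact hzk (hI.l z (hKC z h1) k1 (hs m1) hl (h.ll_down q1 (hQP hz) h3 hl))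
  have hright : ∀ z ∈ Q, RR W p z → z = y' := by
    intro z hz hr
    rcases hQcase z hz with rfl | h1 | h1
    · exfalso
      have l1' := h.rr_up hyP q1 hyk hr
      exact n12 (hI.r k1 (hs m1) k2 (hs m2) l1' (h.rr_up q1 q2 h12 l1'))
    · exact h1
    · exfalso
      have h5 : 0 < det2 p z k5 := by
        by_cases hzk : z = k4
        · subst hzk; exact h45
        have h2 := hcf.ne hcf.hp (hQP hz) q4 hr.1.symm (np h45).1.symm hzk
        have h3 := lt_of_le_of_ne (hK4 z h1) h2.symm
        exact hcf.trans1 (hQP hz) q4 q5 h3 h45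
      have := hI.r z (hKC z h1) k5 (hs m5) hr (h.rr_up (hQP hz) q5 h5 hr)
      subst this
      simp at h5
  by_cases hT' : H' ∈ TP P p
  · left
    refine ⟨H', hT', ?_⟩
    by_contra hcon
    push Not at hcon
    have hsub : H' ⊆ {p, y, k1, y'} := by
      intro z hz
      by_cases hzp : z = p
      · simp [hzp]
      rcases h.int z (hQP (hHQ hz)) hzp (hcon z hz) with h1 | h1
      · rcases hleft z (hHQ hz) h1 with rfl | rfl <;> simp
      · rw [hright z (hHQ hz) h1]; simp
    have h1 := Finset.card_le_card hsub
    have h2 : ({p, y, k1, y'} : Finset Pt).card ≤ 4 := Finset.card_le_four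
    have h3 := hH'.1
    omega
  right
  refine ⟨H', hH', ?_⟩
  have hpH' : p ∉ H' := fun hp => hT' ⟨hH', Or.inl hp⟩
  have hnn : ∀ x ∈ H', ∀ z ∈ H', ∀ e : ℝ, (e = 1 ∨ e = -1) → ¬ Near P e p x z := by
    intro x hx z hz e he hn
    exact hT' ⟨hH', Or.inr ⟨x, hx, z, hz, e, he, hn⟩⟩
  have hmiss : ∀ v ∈ Q, v ∉ convexHull ℝ ((Q : Set Pt) \ {v}) → v ∉ H' → v ≠ p →
      v ∉ CC P p H' := by
    intro v _ hvv hvH hvp hvC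
    apply hvv
    refine convexHull_mono ?_ (mem_CC.1 hvC).2
    intro z hz
    rcases hz with rfl | hz
    · exact ⟨hpQ, fun hh => hvp hh.symm⟩
    · refine ⟨hHQ hz, ?_⟩
      rintro rfl
      exact hvH hz
  have hCQ : CC P p H' ⊆ Q := by
    intro z hz
    rw [mem_CC] at hz
    refine mem_QF.2 ⟨hz.1, QF_hull (P := P) (convexHull_mono ?_ hz.2)⟩
    intro w hw
    rcases hw with rfl | hw
    · exact hpQ
    · exact hHQ hw
  have he1 : ∃ v ∈ Q, (v = y ∨ v = k1) ∧ v ∉ CC P p H' := by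
    by_cases hy : y ∈ H'
    · refine ⟨k1, hKQ k1 l1, Or.inr rfl, hmiss k1 (hKQ k1 l1) hQ.a_vertex ?_ (np h12).1⟩
      intro hk
      exact hnn k1 hk y hy 1 (Or.inl rfl) hQ.nb.near
    · exact ⟨y, hyQ, Or.inl rfl, hmiss y hyQ hQ.y_vertex hy (np hyk).1⟩
  have he2 : ∃ v ∈ Q, (v = y' ∨ v = k4) ∧ v ∉ CC P p H' := by
    by_cases hy : y' ∈ H'
    · refine ⟨k4, hKQ k4 l4, Or.inr rfl, hmiss k4 (hKQ k4 l4) hQ.b_vertex ?_ (np h45).1⟩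
      intro hk
      exact hnn k4 hk y' hy (-1) (Or.inr rfl) hQ.nb'.near
    · exact ⟨y', hyQ', Or.inl rfl, hmiss y' hyQ' hQ.y'_vertex hy (np hky).2⟩
  obtain ⟨v, hvQ, hv, hvC⟩ := he1
  obtain ⟨v', hvQ', hv', hvC'⟩ := he2
  have hvv : v ≠ v' := by
    have hy4 := hcf.trans1 hyP q1 q4 hyk h14
    have h1y := hcf.trans1 q1 q4 hyP' h14 hky
    have hyy := hcf.trans1 hyP q1 hyP' hyk h1y
    rintro rfl
    rcases hv with rfl | rfl <;> rcases hv' with h' | h' <;> subst h'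
    · simp at hyy
    · simp at hy4
    · simp at h1y
    · simp at h14
  constructor
  · have s1 : CC P p H' ⊆ (Q.erase v).erase v' := by
      intro z hz
      rw [Finset.mem_erase, Finset.mem_erase]
      refine ⟨?_, ?_, hCQ hz⟩
      · rintro rfl; exact hvC' hz
      · rintro rfl; exact hvC hz
    have s2 := Finset.card_le_card s1
    rw [Finset.card_erase_of_mem (Finset.mem_erase.2 ⟨hvv.symm, hvQ'⟩),
      Finset.card_erase_of_mem hvQ] at s2
    have s3 : Q ⊆ insert y (insert y' (CC P p K)) := by
      intro z hz
      rcases hQcase z hz with rfl | rfl | h1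
      · simp
      · simp
      · simp [h1]
    have s4 := Finset.card_le_card s3
    have s5 := Finset.card_insert_le y (insert y' (CC P p K))
    have s6 := Finset.card_insert_le y' (CC P p K)
    have s7 : CC P p K ⊆ (CC P p {k1, k2, k3, k4, k5}).erase k5 := by
      intro z hz
      rw [Finset.mem_erase]
      refine ⟨?_, hKC z hz⟩
      rintro rfl
      have := hK4 z hz
      rw [det2_swap] at this
      linarith
    have s8 := Finset.card_le_card s7
    rw [Finset.card_erase_of_mem (hs m5)] at s8
    have s9 : 0 < (CC P p {k1, k2, k3, k4, k5}).card := Finset.card_pos.2 ⟨k5, hs m5⟩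
    omega
  · constructor
    · intro s hs t ht hls hlt
      have a1 := hleft s (hCQ hs) hls
      have a2 := hleft t (hCQ ht) hlt
      have b1 : s ≠ v := by rintro rfl; exact hvC hs
      have b2 : t ≠ v := by rintro rfl; exact hvC ht
      rcases hv with rfl | rfl
      · exact (a1.resolve_left b1).trans (a2.resolve_left b2).symm
      · exact (a1.resolve_right b1).trans (a2.resolve_right b2).symm
    · intro s hs t ht hls hlt
      exact (hright s (hCQ hs) hls).trans (hright t (hCQ ht) hlt).symm

lemma run
    (harborth : ∀ Q : Finset Pt, 10 ≤ Q.card → GenPos ↑Q → (Holes5 ↑Q).Nonempty)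
    (h : Win P p u W) : ∀ m : ℕ, ∀ H ∈ Holes5 (P : Set Pt),
    (CC P p H).card ≤ m → (CC P p H).card ≤ 11 → HInv p W (CC P p H) → Done P p W := by
  intro m
  induction m with
  | zero =>
    intro H hH h0 _ _
    exfalso
    have : p ∈ CC P p H := mem_CC.2 ⟨h.cfg.hp, subset_convexHull ℝ _ (by simp)⟩
    have := Finset.card_pos.2 ⟨p, this⟩
    omega
  | succ m ih =>
    intro H hH h0 h11 hI
    rcases step harborth h hH h11 hI with hd | ⟨H', hH', hlt, hI'⟩
    · exact hd
    · exact ih H' hH' (by omega) (by omega) hI'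

lemma Win.done
    (harborth : ∀ Q : Finset Pt, 10 ≤ Q.card → GenPos ↑Q → (Holes5 ↑Q).Nonempty)
    (h : Win P p u W) (hW : W.card = 10) : Done P p W := by
  have hcf := h.cfg
  have hWne : W.Nonempty := Finset.card_pos.1 (by omega)
  have hisl : ∀ z ∈ P, z ∈ convexHull ℝ (insert p (W : Set Pt)) → z ∈ insert p W := by
    intro z hz hzc
    by_cases hzp : z = p
    · simp [hzp]
    by_contra hcon
    have hzW : z ∉ W := fun hh => hcon (by simp [hh])
    rcases h.int z hz hzp hzW with hl | hr
    · have := hull_pos_or (o := p) (u := z) (v := p) (e := 1) (by simp) ?_ z hzc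
      · rcases this with h1 | h1
        · simp at h1
        · exact hzp h1
      · intro w hw
        rcases hw with rfl | hw
        · simp
        · left; simpa using hl.2 w hw
    · have := hull_pos_or (o := p) (u := z) (v := p) (e := -1) (by simp) ?_ z hzc
      · rcases this with h1 | h1
        · simp at h1
        · exact hzp h1
      · intro w hw
        rcases hw with rfl | hw
        · simp
        · left
          have := hr.2 w hw
          rw [det2_swap] at this; linarith
  obtain ⟨H, hH⟩ := harborth W (by omega) (hcf.gp.mono (by exact_mod_cast h.WP))
  have hHW : H ⊆ W := by exact_mod_cast hH.2.1
  have hHP : H ∈ Holes5 (P : Set Pt) := by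
    refine holes_island (by exact_mod_cast h.WP) ?_ hH
    intro x hx hxc
    have h1 := hisl x hx (convexHull_mono (Set.subset_insert _ _) hxc)
    rcases Finset.mem_insert.1 h1 with rfl | h2
    · exfalso
      refine hcf.ext (convexHull_mono ?_ hxc)
      intro w hw
      refine ⟨h.WP hw, ?_⟩
      rintro rfl
      exact h.pW hw
    · exact h2
  have hCW : CC P p H ⊆ insert p W := by
    intro z hz
    rw [mem_CC] at hz
    exact hisl z hz.1 (convexHull_mono (Set.insert_subset_insert (by exact_mod_cast hHW)) hz.2)
  have hcard : (CC P p H).card ≤ 11 := by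
    have := Finset.card_le_card hCW
    have := Finset.card_insert_le p W
    omega
  refine run harborth h 11 H hHP hcard hcard ⟨?_, ?_⟩
  · intro s hs t _ hl _
    exfalso
    rcases Finset.mem_insert.1 (hCW hs) with h1 | h1
    · exact hl.1 h1
    · have := hl.2 s h1
      simp at this
  · intro s hs t _ hl _
    exfalso
    rcases Finset.mem_insert.1 (hCW hs) with h1 | h1
    · exact hl.1 h1
    · have := hl.2 s h1
      simp at this

end main2

/-! ### Counting -/

lemma Cfg.sortN {P : Finset Pt} {p u : Pt} (h : Cfg P p u) : ∀ n : ℕ, ∀ S : Finset Pt, S ⊆ P →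
    p ∉ S → S.card = n → ∃ f : ℕ → Pt, (∀ j < n, f j ∈ S) ∧ (∀ x ∈ S, ∃ j < n, f j = x) ∧
      ∀ i j, i < j → j < n → 0 < det2 p (f i) (f j) := by
  intro n
  induction n with
  | zero =>
    intro S _ _ hc
    rw [Finset.card_eq_zero] at hc
    subst hc
    exact ⟨fun _ => p, by simp, by simp, by simp⟩
  | succ n ih =>
    intro S hS hp hc
    obtain ⟨a, ha, hmin⟩ := h.exists_min hS hp (Finset.card_pos.1 (by omega))
    obtain ⟨f, h1, h2, h3⟩ := ih (S.erase a) ((Finset.erase_subset _ _).trans hS)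
      (fun hh => hp (Finset.mem_of_mem_erase hh)) (by rw [Finset.card_erase_of_mem ha]; omega)
    refine ⟨fun j => Nat.casesOn j a f, ?_, ?_, ?_⟩
    · intro j hj
      cases j with
      | zero => exact ha
      | succ j => exact Finset.mem_of_mem_erase (h1 j (by omega))
    · intro x hx
      by_cases hxa : x = a
      · exact ⟨0, by omega, hxa.symm⟩
      · obtain ⟨j, hj, hjx⟩ := h2 x (Finset.mem_erase.2 ⟨hxa, hx⟩)
        exact ⟨j + 1, by omega, hjx⟩
    · intro i j hij hj
      cases j with
      | zero => omega
      | succ j =>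
        have hm := h1 j (by omega)
        rw [Finset.mem_erase] at hm
        cases i with
        | zero => exact hmin _ hm.2 hm.1
        | succ i => exact h3 i j (by omega) (by omega)

/-- the 5-holes as a finset -/
def HF (P : Finset Pt) : Finset (Finset Pt) := P.powerset.filter (fun H => H ∈ Holes5 (P : Set Pt))

lemma mem_HF {P H : Finset Pt} : H ∈ HF P ↔ H ∈ Holes5 (P : Set Pt) := by
  simp only [HF, Finset.mem_filter, Finset.mem_powerset, and_iff_right_iff_imp]
  intro h
  exact_mod_cast h.2.1

lemma coe_HF (P : Finset Pt) : (HF P : Set (Finset Pt)) = Holes5 (P : Set Pt) := by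
  ext H; exact mem_HF

lemma HF_card (P : Finset Pt) : (Holes5 (P : Set Pt)).ncard = (HF P).card := by
  rw [← coe_HF, Set.ncard_coe_finset]

lemma tp_count {P : Finset Pt} {p u : Pt}
    (harborth : ∀ Q : Finset Pt, 10 ≤ Q.card → GenPos ↑Q → (Holes5 ↑Q).Nonempty)
    (h : Cfg P p u) :
    (P.card - 1) / 10 ≤ 5 * ((HF P).filter (fun H => H ∈ TP P p)).card := by
  have hc : (P.erase p).card = P.card - 1 := Finset.card_erase_of_mem h.hp
  obtain ⟨f, h1, h2, h3⟩ := h.sortN (P.card - 1) (P.erase p) (Finset.erase_subset _ _)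
    (by simp) hc
  have hinj : ∀ i j, i < P.card - 1 → j < P.card - 1 → f i = f j → i = j := by
    intro i j hi hj hij
    rcases lt_trichotomy i j with hlt | heq | hlt
    · have := h3 i j hlt hj
      rw [hij] at this; simp at this
    · exact heq
    · have := h3 j i hlt hi
      rw [hij] at this; simp at this
  have hP : ∀ j < P.card - 1, f j ∈ P := fun j hj => Finset.mem_of_mem_erase (h1 j hj)
  have hdone : ∀ i : ℕ, i < (P.card - 1) / 10 → ∃ H ∈ TP P p, ∃ j, 10 * i ≤ j ∧ j < 10 * i + 10 ∧
      f j ∈ H := by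
    intro i hi
    have hW : Win P p u ((Finset.Ico (10 * i) (10 * i + 10)).image f) := by
      refine ⟨h, ?_, ?_, ?_⟩
      · intro z hz
        simp only [Finset.mem_image, Finset.mem_Ico] at hz
        obtain ⟨j, hj, rfl⟩ := hz
        exact hP j (by omega)
      · intro hz
        simp only [Finset.mem_image, Finset.mem_Ico] at hz
        obtain ⟨j, hj, hjp⟩ := hz
        have := h1 j (by omega)
        rw [Finset.mem_erase] at this
        exact this.1 hjp
      · intro x hx hxp hxW
        obtain ⟨j, hj, rfl⟩ := h2 x (Finset.mem_erase.2 ⟨hxp, hx⟩)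
        have hj' : j < 10 * i ∨ 10 * i + 10 ≤ j := by
          by_contra hcon
          push Not at hcon
          apply hxW
          simp only [Finset.mem_image, Finset.mem_Ico]
          exact ⟨j, ⟨hcon.1, hcon.2⟩, rfl⟩
        rcases hj' with hj' | hj'
        · left
          refine ⟨hxp, ?_⟩
          intro w hw
          simp only [Finset.mem_image, Finset.mem_Ico] at hw
          obtain ⟨l, hl, rfl⟩ := hw
          exact h3 j l (by omega) (by omega)
        · right
          refine ⟨hxp, ?_⟩
          intro w hw
          simp only [Finset.mem_image, Finset.mem_Ico] at hw
          obtain ⟨l, hl, rfl⟩ := hw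
          exact h3 l j (by omega) (by omega)
    have hcard : ((Finset.Ico (10 * i) (10 * i + 10)).image f).card = 10 := by
      rw [Finset.card_image_of_injOn]
      · simp
      · intro a ha b hb hab
        simp only [Finset.coe_Ico, Set.mem_Ico] at ha hb
        exact hinj a b (by omega) (by omega) hab
    obtain ⟨H, hH, x, hx, hxW⟩ := hW.done harborth hcard
    simp only [Finset.mem_image, Finset.mem_Ico] at hxW
    obtain ⟨j, hj, rfl⟩ := hxW
    exact ⟨H, hH, j, hj.1, hj.2, hx⟩
  have hch : ∀ i : ℕ, ∃ j, i < (P.card - 1) / 10 → (10 * i ≤ j ∧ j < 10 * i + 10 ∧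
      ∃ H ∈ TP P p, f j ∈ H) := by
    intro i
    by_cases hi : i < (P.card - 1) / 10
    · obtain ⟨H, hH, j, a, b, c⟩ := hdone i hi
      exact ⟨j, fun _ => ⟨a, b, H, hH, c⟩⟩
    · exact ⟨0, fun hh => absurd hh hi⟩
  choose g hg using hch
  set T := (HF P).filter (fun H => H ∈ TP P p) with hT
  have hsub : (Finset.range ((P.card - 1) / 10)).image (fun i => f (g i)) ⊆ T.biUnion id := by
    intro z hz
    simp only [Finset.mem_image, Finset.mem_range] at hz
    obtain ⟨i, hi, rfl⟩ := hz
    obtain ⟨_, _, H, hH, hm⟩ := hg i hi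
    rw [Finset.mem_biUnion]
    refine ⟨H, ?_, hm⟩
    rw [hT, Finset.mem_filter]
    exact ⟨mem_HF.2 hH.1, hH⟩
  have h5 := Finset.card_le_card hsub
  rw [Finset.card_image_of_injOn, Finset.card_range] at h5
  · have h6 : (T.biUnion id).card ≤ T.card * 5 := by
      apply Finset.card_biUnion_le_card_mul
      intro H hH
      rw [hT, Finset.mem_filter] at hH
      exact hH.2.1.1.le
    omega
  · intro a ha b hb hab
    simp only [Finset.coe_range, Set.mem_Iio] at ha hb
    have ga := hg a ha
    have gb := hg b hb
    have := hinj _ _ (by omega) (by omega) hab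
    omega

lemma near_count {P : Finset Pt} (hP : GenPos (P : Set Pt)) {x z : Pt} (hx : x ∈ P) {e : ℝ}
    (he : e = 1 ∨ e = -1) : (P.filter (fun p => Near P e p x z)).card ≤ 12 := by
  set S := P.filter (fun p => Near P e p x z) with hS
  rcases S.eq_empty_or_nonempty with h0 | hne
  · rw [h0]; simp
  have hxz : x ≠ z := by
    rintro rfl
    obtain ⟨p, hp⟩ := hne
    rw [hS, Finset.mem_filter] at hp
    have := hp.2.1
    simp at this
  obtain ⟨κ, hκ⟩ := rot_key hxz
  obtain ⟨q, hq, hmax⟩ := S.exists_max_image (fun w => e * κ w) hne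
  have hpos : ∀ p ∈ S, p ∈ P ∧ 0 < (-e) * det2 x z p ∧ p ≠ x ∧ 0 < e * det2 x p z := by
    intro p hp
    rw [hS, Finset.mem_filter] at hp
    have h1 := hp.2.1
    refine ⟨hp.1, ?_, ?_, h1⟩
    · rw [det2_swap] at h1; linarith
    · rintro rfl; simp at h1
  have hqq := hpos q hq
  have hsub : S ⊆ insert q (P.filter (fun w => 0 < e * det2 x q w ∧ 0 < e * det2 x w z)) := by
    intro p hp
    by_cases hpq : p = q
    · simp [hpq]
    rw [Finset.mem_insert, Finset.mem_filter]
    right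
    have hpp := hpos p hp
    refine ⟨hpp.1, ?_, hpp.2.2.2⟩
    have h1 := hmax p hp
    have h3 := det2_ne hP hx hqq.1 hpp.1 hqq.2.2.1.symm hpp.2.2.1.symm (Ne.symm hpq)
    have h4 := hκ (-e) q p hqq.2.1 hpp.2.1
    have h5 := hκ (-e) p q hpp.2.1 hqq.2.1
    rw [det2_swap x q p] at h5
    rcases he with rfl | rfl
    · by_contra hcon
      have h6 : 0 < - det2 x q p := by
        rcases lt_or_gt_of_ne h3 with h | h <;> linarith
      rw [h5] at h6
      linarith
    · by_contra hcon
      have h6 : 0 < det2 x q p := by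
        rcases lt_or_gt_of_ne h3 with h | h <;> linarith
      rw [h4] at h6
      linarith
  have h1 := Finset.card_le_card hsub
  have h2 := Finset.card_insert_le q
    (P.filter (fun w => 0 < e * det2 x q w ∧ 0 < e * det2 x w z))
  have h3 : (P.filter (fun w => 0 < e * det2 x q w ∧ 0 < e * det2 x w z)).card ≤ 11 := by
    rw [hS, Finset.mem_filter] at hq
    exact hq.2.2
  omega

lemma hole_count {P : Finset Pt} (hP : GenPos (P : Set Pt)) {H : Finset Pt} (hH : H ∈ HF P) :
    (P.filter (fun p => H ∈ TP P p)).card ≤ 605 := by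
  rw [mem_HF] at hH
  have hHP : H ⊆ P := by exact_mod_cast hH.2.1
  have hsub : P.filter (fun p => H ∈ TP P p) ⊆ H ∪ (H ×ˢ H).biUnion (fun q =>
      P.filter (fun p => Near P 1 p q.1 q.2) ∪ P.filter (fun p => Near P (-1) p q.1 q.2)) := by
    intro p hp
    rw [Finset.mem_filter] at hp
    obtain ⟨hpP, _, hp | ⟨x, hx, z, hz, e, he, hn⟩⟩ := hp
    · simp [hp]
    · rw [Finset.mem_union, Finset.mem_biUnion]
      right
      refine ⟨(x, z), by simp [hx, hz], ?_⟩
      rw [Finset.mem_union, Finset.mem_filter, Finset.mem_filter]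
      rcases he with rfl | rfl
      · left; exact ⟨hpP, hn⟩
      · right; exact ⟨hpP, hn⟩
  have h1 := Finset.card_le_card hsub
  have h2 : ((H ×ˢ H).biUnion (fun q => P.filter (fun p => Near P 1 p q.1 q.2) ∪
      P.filter (fun p => Near P (-1) p q.1 q.2))).card ≤ (H ×ˢ H).card * 24 := by
    apply Finset.card_biUnion_le_card_mul
    intro q hq
    rw [Finset.mem_product] at hq
    have a1 := near_count hP (hHP hq.1) (z := q.2) (e := 1) (Or.inl rfl)
    have a2 := near_count hP (hHP hq.1) (z := q.2) (e := -1) (Or.inr rfl)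
    have a3 := Finset.card_union_le (P.filter (fun p => Near P 1 p q.1 q.2))
      (P.filter (fun p => Near P (-1) p q.1 q.2))
    omega
  have h3 := Finset.card_union_le H ((H ×ˢ H).biUnion (fun q =>
      P.filter (fun p => Near P 1 p q.1 q.2) ∪ P.filter (fun p => Near P (-1) p q.1 q.2)))
  rw [Finset.card_product, hH.1] at h2
  rw [hH.1] at h3
  omega

def EF (P : Finset Pt) : Finset Pt := P.filter (fun p => p ∈ extremePts (P : Set Pt))

lemma coe_EF (P : Finset Pt) : (EF P : Set Pt) = extremePts (P : Set Pt) := by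
  ext x
  simp only [EF, Finset.coe_filter, Set.mem_ofPred_eq, and_iff_right_iff_imp]
  intro hx
  exact hx.1

lemma EF_card (P : Finset Pt) : (extremePts (P : Set Pt)).ncard = (EF P).card := by
  rw [← coe_EF, Set.ncard_coe_finset]

lemma second_ineq
    (harborth : ∀ Q : Finset Pt, 10 ≤ Q.card → GenPos ↑Q → (Holes5 ↑Q).Nonempty)
    {P : Finset Pt} (hP : GenPos (P : Set Pt)) (hn : 10 ≤ P.card) :
    (EF P).card * P.card ≤ 60500 * (HF P).card := by
  have hpos : 1 ≤ (HF P).card := by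
    obtain ⟨H, hH⟩ := harborth P hn hP
    exact Finset.card_pos.2 ⟨H, mem_HF.2 hH⟩
  have hEP : (EF P).card ≤ P.card := Finset.card_le_card (Finset.filter_subset _ _)
  rcases hn.eq_or_lt with h10 | h11
  · rw [← h10] at hEP ⊢
    omega
  set k := (P.card - 1) / 10 with hk
  have h1 : (EF P).card * ((k + 4) / 5) ≤ (HF P).card * 605 := by
    refine Finset.card_mul_le_card_mul (fun p H => H ∈ TP P p) ?_ ?_
    · intro p hp
      rw [← Finset.mem_coe, coe_EF] at hp
      obtain ⟨u, hu⟩ := exists_support hp.2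
      have hc : Cfg P p u := ⟨hP, hp.1, hp.2, hu⟩
      have := tp_count harborth hc
      unfold Finset.bipartiteAbove
      show (k + 4) / 5 ≤ ((HF P).filter (fun H => H ∈ TP P p)).card
      omega
    · intro H hH
      unfold Finset.bipartiteBelow
      refine le_trans (Finset.card_le_card ?_) (hole_count hP hH)
      exact Finset.filter_subset_filter _ (Finset.filter_subset _ _)
  have h2 : P.card ≤ 100 * ((k + 4) / 5) := by omega
  calc (EF P).card * P.card ≤ (EF P).card * (100 * ((k + 4) / 5)) := Nat.mul_le_mul_left _ h2
    _ = 100 * ((EF P).card * ((k + 4) / 5)) := by ring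
    _ ≤ 100 * ((HF P).card * 605) := Nat.mul_le_mul_left _ h1
    _ = 60500 * (HF P).card := by ring

/-! ### Layers -/

lemma layerRest_sub (P : Set Pt) (i : ℕ) : layerRest P i ⊆ P := by
  induction i with
  | zero => exact fun x hx => hx
  | succ i ih => exact fun x hx => ih hx.1

lemma layerRest_island (P : Set Pt) (i : ℕ) :
    ∀ x ∈ P, x ∈ convexHull ℝ (layerRest P i) → x ∈ layerRest P i := by
  induction i with
  | zero => intro x hx _; exact hx
  | succ i ih =>
    intro x hx hxc
    refine ⟨ih x hx (convexHull_mono (fun y hy => hy.1) hxc), ?_⟩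
    intro hext
    apply hext.2
    refine convexHull_mono ?_ hxc
    intro y hy
    refine ⟨hy.1, ?_⟩
    rintro rfl
    exact hy.2 hext

def RF (P : Finset Pt) (i : ℕ) : Finset Pt := P.filter (fun x => x ∈ layerRest (P : Set Pt) i)

lemma coe_RF (P : Finset Pt) (i : ℕ) : (RF P i : Set Pt) = layerRest (P : Set Pt) i := by
  ext x
  simp only [RF, Finset.coe_filter, Set.mem_ofPred_eq, and_iff_right_iff_imp]
  intro hx
  exact layerRest_sub _ _ hx

lemma layer_eq (P : Finset Pt) (i : ℕ) : layer (P : Set Pt) i = (EF (RF P i) : Set Pt) := by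
  rw [coe_EF, coe_RF]; rfl

lemma RF_succ (P : Finset Pt) (i : ℕ) :
    (RF P (i + 1)).card + (EF (RF P i)).card = (RF P i).card := by
  have h1 : RF P (i + 1) = RF P i \ EF (RF P i) := by
    apply Finset.coe_injective
    rw [Finset.coe_sdiff, coe_EF, coe_RF, coe_RF]
    rfl
  rw [h1]
  exact Finset.card_sdiff_add_card_eq_card (Finset.filter_subset _ _)

lemma EF_pos {Q : Finset Pt} (hQ : 0 < Q.card) : 0 < (EF Q).card := by
  obtain ⟨e, he, hext⟩ := exists_extreme Q (Finset.card_pos.1 hQ)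
  apply Finset.card_pos.2
  refine ⟨e, ?_⟩
  rw [EF, Finset.mem_filter]
  exact ⟨he, he, hext⟩

lemma RF_le (P : Finset Pt) (i : ℕ) : (RF P i).card ≤ P.card - i := by
  induction i with
  | zero => exact Finset.card_le_card (Finset.filter_subset _ _)
  | succ i ih =>
    have h1 := RF_succ P i
    by_cases h0 : 0 < (RF P i).card
    · have := EF_pos h0
      omega
    · omega

lemma RF_sum (P : Finset Pt) (t : ℕ) :
    (∑ i ∈ Finset.range t, (EF (RF P i)).card) + (RF P t).card = P.card := by
  induction t with
  | zero =>
    have : RF P 0 = P := by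
      apply Finset.coe_injective
      rw [coe_RF]; rfl
    simp [this]
  | succ t ih =>
    rw [Finset.sum_range_succ]
    have := RF_succ P t
    omega

lemma layers_ge (P : Finset Pt) (t : ℕ) (h : ∀ i < t, 0 < (RF P i).card) :
    t ≤ numLayers (P : Set Pt) := by
  unfold numLayers
  have hfin : {i | (layer (P : Set Pt) i).Nonempty}.Finite := by
    apply (Set.finite_Iio P.card).subset
    intro i hi
    have hi' : (layer (P : Set Pt) i).Nonempty := hi
    rw [layer_eq] at hi'
    have h1 : 0 < (EF (RF P i)).card := Finset.card_pos.2 (by exact_mod_cast hi')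
    have h2 := RF_le P i
    have h3 : (EF (RF P i)).card ≤ (RF P i).card := Finset.card_le_card (Finset.filter_subset _ _)
    simp only [Set.mem_Iio]
    omega
  have hsub : ((Finset.range t : Finset ℕ) : Set ℕ) ⊆ {i | (layer (P : Set Pt) i).Nonempty} := by
    intro i hi
    simp only [Finset.coe_range, Set.mem_Iio] at hi
    show (layer (P : Set Pt) i).Nonempty
    rw [layer_eq]
    exact_mod_cast Finset.card_pos.1 (EF_pos (h i hi))
  have := Set.ncard_le_ncard hsub hfin
  rwa [Set.ncard_coe_finset, Finset.card_range] at this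

lemma first_ineq
    (harborth : ∀ Q : Finset Pt, 10 ≤ Q.card → GenPos ↑Q → (Holes5 ↑Q).Nonempty)
    {P : Finset Pt} (hP : GenPos (P : Set Pt)) (hn : 10 ≤ P.card) :
    P.card ^ 2 ≤ 242000 * (numLayers (P : Set Pt) * (HF P).card) := by
  have hpos : 1 ≤ (HF P).card := by
    obtain ⟨H, hH⟩ := harborth P hn hP
    exact Finset.card_pos.2 ⟨H, mem_HF.2 hH⟩
  by_cases h20 : P.card < 20
  · have hL : 1 ≤ numLayers (P : Set Pt) := by
      apply layers_ge
      intro i hi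
      have h0 : i = 0 := by omega
      subst h0
      have := RF_sum P 0
      simp at this
      omega
    have h1 : 1 ≤ numLayers (P : Set Pt) * (HF P).card := Nat.mul_pos hL hpos
    nlinarith
  have hex : ∃ t, 2 * (RF P t).card < P.card := by
    refine ⟨P.card, ?_⟩
    have := RF_le P P.card
    omega
  set t := Nat.find hex with ht
  have ht1 : 2 * (RF P t).card < P.card := Nat.find_spec hex
  have ht2 : ∀ i < t, P.card ≤ 2 * (RF P i).card := fun i hi => not_lt.1 (Nat.find_min hex hi)
  have htL : t ≤ numLayers (P : Set Pt) := by
    apply layers_ge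
    intro i hi
    have := ht2 i hi
    omega
  have hi : ∀ i ∈ Finset.range t, (EF (RF P i)).card * P.card ≤ 121000 * (HF P).card := by
    intro i hi
    rw [Finset.mem_range] at hi
    have h1 := ht2 i hi
    have hsub : ((RF P i : Finset Pt) : Set Pt) ⊆ P := by
      exact_mod_cast Finset.filter_subset _ _
    have h2 := second_ineq harborth (P := RF P i) (hP.mono hsub) (by omega)
    have h3 : (HF (RF P i)).card ≤ (HF P).card := by
      apply Finset.card_le_card
      intro H hH
      rw [mem_HF] at hH ⊢
      refine holes_island hsub ?_ hH
      rw [coe_RF]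
      exact layerRest_island _ i
    calc (EF (RF P i)).card * P.card ≤ (EF (RF P i)).card * (2 * (RF P i).card) :=
          Nat.mul_le_mul_left _ h1
      _ = 2 * ((EF (RF P i)).card * (RF P i).card) := by ring
      _ ≤ 121000 * (HF P).card := by omega
  have hsum := Finset.sum_le_sum hi
  rw [← Finset.sum_mul, Finset.sum_const, Finset.card_range, smul_eq_mul] at hsum
  have h5 := RF_sum P t
  have h6 : P.card ≤ 2 * ∑ i ∈ Finset.range t, (EF (RF P i)).card := by omega
  calc P.card ^ 2 = P.card * P.card := by ring
    _ ≤ (2 * ∑ i ∈ Finset.range t, (EF (RF P i)).card) * P.card := Nat.mul_le_mul_right _ h6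
    _ = 2 * ((∑ i ∈ Finset.range t, (EF (RF P i)).card) * P.card) := by ring
    _ ≤ 2 * (t * (121000 * (HF P).card)) := Nat.mul_le_mul_left _ hsum
    _ = 242000 * (t * (HF P).card) := by ring
    _ ≤ 242000 * (numLayers (P : Set Pt) * (HF P).card) := by gcongr


/-- assuming Harborth's theorem, there is an absolute constant
`c > 0` such that every set `P` of `n ≥ 10` points in general position
determines at least `c·n²/L(P)` 5-holes, where `L(P)` is the number of convex
layers, and also at least `c·|ℓ₁|·n` 5-holes, where `ℓ₁` is the outermost
layer (the extreme points of `P`). -/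
theorem stmt18
    (harborth : ∀ Q : Finset Pt, Q.card = 10 → GenPos ↑Q → (Holes5 ↑Q).Nonempty) :
    ∃ c : ℝ, 0 < c ∧ ∀ P : Finset Pt, GenPos ↑P → 10 ≤ P.card →
      c * (P.card : ℝ) ^ 2 / (numLayers (↑P : Set Pt) : ℝ) ≤
        ((Holes5 (↑P : Set Pt)).ncard : ℝ) ∧
      c * ((extremePts (↑P : Set Pt)).ncard : ℝ) * (P.card : ℝ) ≤
        ((Holes5 (↑P : Set Pt)).ncard : ℝ) := by
  have hge : ∀ Q : Finset Pt, 10 ≤ Q.card → GenPos ↑Q → (Holes5 ↑Q).Nonempty := by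
    intro Q hQ hg
    exact harborth_ge harborth (Q.card - 10) Q (by omega) hg
  refine ⟨1 / 242000, by norm_num, ?_⟩
  intro P hP hn
  rw [HF_card, EF_card]
  have h1 := first_ineq hge hP hn
  have h2 := second_ineq hge hP hn
  have h1' : (P.card : ℝ) ^ 2 ≤ 242000 * ((numLayers (P : Set Pt) : ℝ) * ((HF P).card : ℝ)) := by
    exact_mod_cast h1
  have h2' : ((EF P).card : ℝ) * (P.card : ℝ) ≤ 60500 * ((HF P).card : ℝ) := by
    exact_mod_cast h2
  have h3 : (0 : ℝ) ≤ ((HF P).card : ℝ) := by positivity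
  constructor
  · have hL : 0 < numLayers (P : Set Pt) := by
      rcases Nat.eq_zero_or_pos (numLayers (P : Set Pt)) with h0 | h0
      · rw [h0] at h1
        nlinarith
      · exact h0
    have hL' : (0 : ℝ) < (numLayers (P : Set Pt) : ℝ) := by exact_mod_cast hL
    rw [div_le_iff₀ hL']
    linarith
  · linarith
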